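/- Let β ∈ (1,2) be a multinacci number and let [t_L, t_R) be a nonempty β-Lyndon interval contained in [0, 1 − 1/β). Then [t_L, t_R] is a maximal interval on which the dimension function η_β(t) = dim_H K_β(t) is constant: η_β is constant on [t_L, t_R], and η_β is not constant on any interval properly containing [t_L, t_R]. -/

import Mathlib

open Set Filter MeasureTheory

/-- The β-transformation `x ↦ βx (mod 1)`. -/
noncomputable def Tbeta (β x : ℝ) : ℝ := Int.fract (β * x)

/-- The survivor set `K_β(t) = {x ∈ [0,1) : T_β^n x ≥ t for all n ≥ 0}`. -/
def Kset (β t : ℝ) : Set ℝ := {x | x ∈ Set.Ico (0 : ℝ) 1 ∧ ∀ n : ℕ, t ≤ (Tbeta β)^[n] x}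

/-- Strict lexicographic order on sequences of naturals. -/
def seqLt (x y : ℕ → ℕ) : Prop := ∃ n, (∀ i, i < n → x i = y i) ∧ x n < y n

/-- Lexicographic order on sequences of naturals. -/
def seqLe (x y : ℕ → ℕ) : Prop := x = y ∨ seqLt x y

/-- The `n`-th iterate of the left shift. -/
def shiftN (n : ℕ) (x : ℕ → ℕ) : ℕ → ℕ := fun i => x (i + n)

/-- The sequence `w 0^∞`. -/
def wordSeq (w : List ℕ) : ℕ → ℕ := fun i => w.getD i 0

/-- The periodic sequence `w^∞`. -/
def perSeq (w : List ℕ) : ℕ → ℕ := fun i => w.getD (i % w.length) 0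

/-- The sequence obtained by concatenating the word `w` with the sequence `x`. -/
def catSeq (w : List ℕ) (x : ℕ → ℕ) : ℕ → ℕ :=
  fun i => if i < w.length then w.getD i 0 else x (i - w.length)

/-- The greedy β-expansion of `t`: the digit `b_{i+1}` is `⌊β T_β^i t⌋`. -/
noncomputable def greedy (β t : ℝ) : ℕ → ℕ := fun i => (⌊β * (Tbeta β)^[i] t⌋).toNat

/-- `d` is the quasi-greedy β-expansion of `1`: the lexicographically largest
sequence in `{0,1}^ℕ` not ending in `0^∞` whose digits sum to `1` in base `β`. -/
def IsQuasiGreedy (β : ℝ) (d : ℕ → ℕ) : Prop :=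
  (∀ i, d i ≤ 1) ∧ (¬ ∃ N, ∀ n, N ≤ n → d n = 0) ∧
  (∑' i : ℕ, (d i : ℝ) / β ^ (i + 1) = 1) ∧
  ∀ e : ℕ → ℕ, (∀ i, e i ≤ 1) → (¬ ∃ N, ∀ n, N ≤ n → e n = 0) →
    (∑' i : ℕ, (e i : ℝ) / β ^ (i + 1) = 1) → seqLe e d

/-- `s = s_1…s_p` is a β-Lyndon word: `s_{i+1}…s_p ≻ s_1…s_{p-i}` for `1 ≤ i < p`
and `σ^n(s^∞) ≺ δ(β)` for all `n ≥ 0`. -/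
def IsBetaLyndon (β : ℝ) (s : List ℕ) : Prop :=
  s ≠ [] ∧ (∀ a ∈ s, a ≤ 1) ∧
  (∀ i, 1 ≤ i → i < s.length →
    seqLt (wordSeq (s.take (s.length - i))) (wordSeq (s.drop i))) ∧
  (∀ d : ℕ → ℕ, IsQuasiGreedy β d → ∀ n : ℕ, seqLt (shiftN n (perSeq s)) d)

/-- Left endpoint `t_L = Σ_{i=1}^p s_i β^{-i}` of the β-Lyndon interval generated by `s`. -/
noncomputable def lyndonLeft (β : ℝ) (s : List ℕ) : ℝ :=
  ∑ i ∈ Finset.range s.length, (s.getD i 0 : ℝ) / β ^ (i + 1)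

/-- Right endpoint `t_R = (β^p/(β^p - 1)) t_L` of the β-Lyndon interval generated by `s`. -/
noncomputable def lyndonRight (β : ℝ) (s : List ℕ) : ℝ :=
  β ^ s.length / (β ^ s.length - 1) * lyndonLeft β s

/-- The union of all β-Lyndon intervals `[t_L, t_R)`. -/
noncomputable def lyndonUnionIco (β : ℝ) : Set ℝ :=
  ⋃ s ∈ {s : List ℕ | IsBetaLyndon β s}, Set.Ico (lyndonLeft β s) (lyndonRight β s)

/-- The symbolic survivor set `K̃_β(t)` with upper bound sequence `d = δ(β)`. -/
def Ktilde (β t : ℝ) (d : ℕ → ℕ) : Set (ℕ → ℕ) :=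
  {x | (∀ i, x i ≤ 1) ∧ ∀ n : ℕ, seqLe (greedy β t) (shiftN n x) ∧ seqLe (shiftN n x) d}

/-- The set-valued bifurcation set `E_β`. -/
def Eset (β : ℝ) : Set ℝ :=
  {t | t ∈ Set.Ico (0 : ℝ) 1 ∧ ∀ t', t < t' → t' < 1 → Kset β t' ≠ Kset β t}

/-- The dimension bifurcation set `B_β`. -/
def Bset (β : ℝ) : Set ℝ :=
  {t | t ∈ Set.Ico (0 : ℝ) 1 ∧ ∀ t', t < t' → t' < 1 → dimH (Kset β t') ≠ dimH (Kset β t)}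

/-- `β` is a multinacci number: `β^{m+1} = β^m + ⋯ + β + 1` for some `m ≥ 1`. -/
def IsMultinacci (β : ℝ) : Prop :=
  ∃ m : ℕ, 1 ≤ m ∧ β ^ (m + 1) = ∑ i ∈ Finset.range (m + 1), β ^ i


/-- Evaluate a word followed by a tail of value `v`. -/
noncomputable def ev (β : ℝ) : List ℕ → ℝ → ℝ
  | [], v => v
  | d :: w, v => ((d : ℝ) + ev β w v) / β

/-- All nonempty suffixes have value in `[t,1)`. -/
def Adm (β t : ℝ) : List ℕ → ℝ → Prop
  | [], _ => True
  | d :: w, v => (t ≤ ev β (d :: w) v ∧ ev β (d :: w) v < 1) ∧ Adm β t w v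

/-- The first `n` greedy digits. -/
noncomputable def dg (β : ℝ) : ℕ → ℝ → List ℕ
  | 0, _ => []
  | n + 1, x => (⌊β * x⌋).toNat :: dg β n (Tbeta β x)

/-- The orbit of `1`. -/
noncomputable def Rr (β : ℝ) : ℕ → ℝ
  | 0 => 1
  | k + 1 => β * Rr β k - 1

/-- Word powers. -/
def powW (w : List ℕ) : ℕ → List ℕ
  | 0 => []
  | n + 1 => w ++ powW w n

theorem powW_length (w : List ℕ) (n : ℕ) : (powW w n).length = n * w.length := by
  induction n with
  | zero => simp [powW]
  | succ n ih => simp [powW, ih]; ring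

theorem ev_append (β : ℝ) (a b : List ℕ) (v : ℝ) : ev β (a ++ b) v = ev β a (ev β b v) := by
  induction a with
  | nil => rfl
  | cons d a ih => simp [ev, ih]

theorem Adm_append (β t : ℝ) (a b : List ℕ) (v : ℝ) :
    Adm β t (a ++ b) v ↔ Adm β t a (ev β b v) ∧ Adm β t b v := by
  induction a with
  | nil => simp [Adm]
  | cons d a ih =>
    simp only [List.cons_append, Adm, ih, ev, ev_append]; tauto

theorem ev_sub {β : ℝ} (hβ : 1 < β) (w : List ℕ) (u v : ℝ) :
    ev β w u - ev β w v = (u - v) / β ^ w.length := by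
  have h0 : β ≠ 0 := by positivity
  induction w with
  | nil => simp [ev]
  | cons d w ih =>
    simp only [ev, List.length_cons, pow_succ]
    rw [← div_div, ← ih]; ring

theorem ev_lt {β : ℝ} (hβ : 1 < β) (w : List ℕ) {u v : ℝ} (h : u < v) : ev β w u < ev β w v := by
  have h1 := ev_sub hβ w v u
  have : 0 < (v - u) / β ^ w.length := div_pos (by linarith) (by positivity)
  linarith

theorem ev_le {β : ℝ} (hβ : 1 < β) (w : List ℕ) {u v : ℝ} (h : u ≤ v) : ev β w u ≤ ev β w v := by
  rcases h.eq_or_lt with h | h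
  · rw [h]
  · exact (ev_lt hβ w h).le

theorem ev_nonneg {β : ℝ} (hβ : 1 < β) (w : List ℕ) {v : ℝ} (h : 0 ≤ v) : 0 ≤ ev β w v := by
  induction w with
  | nil => exact h
  | cons d w ih => simp only [ev]; positivity

theorem Adm_lt {β t : ℝ} {w : List ℕ} {v : ℝ} (h : Adm β t w v) (hv : v < 1) : ev β w v < 1 := by
  cases w with
  | nil => exact hv
  | cons d w => exact h.1.2

theorem Adm_ge {β t : ℝ} {w : List ℕ} {v : ℝ} (h : Adm β t w v) (hv : t ≤ v) : t ≤ ev β w v := by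
  cases w with
  | nil => exact hv
  | cons d w => exact h.1.1

theorem Tbeta_ev {β : ℝ} (hβ : 1 < β) (d : ℕ) {v : ℝ} (h0 : 0 ≤ v) (h1 : v < 1) :
    Tbeta β (((d : ℝ) + v) / β) = v := by
  have h : β ≠ 0 := by positivity
  rw [Tbeta, mul_div_cancel₀ _ h, Int.fract_natCast_add]
  exact Int.fract_eq_self.2 ⟨h0, h1⟩

theorem Adm_iter {β t : ℝ} (hβ : 1 < β) (ht : 0 ≤ t) {w : List ℕ} {v : ℝ} (h : Adm β t w v)
    (hv : t ≤ v) (hv1 : v < 1) : (Tbeta β)^[w.length] (ev β w v) = v ∧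
      ∀ i ≤ w.length, t ≤ (Tbeta β)^[i] (ev β w v) ∧ (Tbeta β)^[i] (ev β w v) < 1 := by
  induction w with
  | nil => refine ⟨rfl, fun i hi => ?_⟩; simp at hi; subst hi; exact ⟨hv, hv1⟩
  | cons d w ih =>
    obtain ⟨h1, h2⟩ := ih h.2
    have hT : Tbeta β (ev β (d :: w) v) = ev β w v :=
      Tbeta_ev hβ d (ht.trans (Adm_ge h.2 hv)) (Adm_lt h.2 hv1)
    refine ⟨?_, ?_⟩
    · rw [List.length_cons, Function.iterate_succ_apply, hT, h1]
    · intro i hi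
      cases i with
      | zero => exact h.1
      | succ i =>
        rw [Function.iterate_succ_apply, hT]
        exact h2 i (by simpa using hi)

theorem Kset_iter {β t : ℝ} {x : ℝ} (h : x ∈ Kset β t) (n : ℕ) : (Tbeta β)^[n] x ∈ Kset β t := by
  refine ⟨?_, fun k => ?_⟩
  · cases n with
    | zero => exact h.1
    | succ n =>
      rw [Function.iterate_succ_apply']
      exact ⟨Int.fract_nonneg _, Int.fract_lt_one _⟩
  · rw [← Function.iterate_add_apply]; exact h.2 _

theorem Kset_ev {β t : ℝ} (hβ : 1 < β) (ht : 0 ≤ t) {w : List ℕ} {v : ℝ} (h : Adm β t w v)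
    (hv : v ∈ Kset β t) : ev β w v ∈ Kset β t := by
  have hv0 : t ≤ v := hv.2 0
  obtain ⟨h1, h2⟩ := Adm_iter hβ ht h hv0 hv.1.2
  refine ⟨⟨ht.trans (Adm_ge h hv0), Adm_lt h hv.1.2⟩, fun n => ?_⟩
  rcases le_total n w.length with hn | hn
  · exact (h2 n hn).1
  · obtain ⟨k, rfl⟩ := Nat.exists_eq_add_of_le' hn
    rw [Function.iterate_add_apply, h1]; exact hv.2 k

theorem Kset_anti {β : ℝ} {t t' : ℝ} (h : t ≤ t') : Kset β t' ⊆ Kset β t :=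
  fun _ hx => ⟨hx.1, fun n => h.trans (hx.2 n)⟩

theorem dg_length (β : ℝ) (n : ℕ) (x : ℝ) : (dg β n x).length = n := by
  induction n generalizing x with
  | zero => rfl
  | succ n ih => simp [dg, ih]

theorem floor_cast {β x : ℝ} (hβ : 1 < β) (hx : 0 ≤ x) :
    (((⌊β * x⌋).toNat : ℕ) : ℝ) + Tbeta β x = β * x := by
  have h : (0 : ℤ) ≤ ⌊β * x⌋ := Int.floor_nonneg.2 (by positivity)
  have h2 : (((⌊β * x⌋).toNat : ℕ) : ℝ) = ((⌊β * x⌋ : ℤ) : ℝ) := by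
    exact_mod_cast congrArg (Int.cast (R := ℝ)) (Int.toNat_of_nonneg h)
  rw [h2, Tbeta]; exact Int.floor_add_fract _

theorem ev_dg {β : ℝ} (hβ : 1 < β) (n : ℕ) {x : ℝ} (hx : 0 ≤ x) :
    ev β (dg β n x) ((Tbeta β)^[n] x) = x := by
  induction n generalizing x with
  | zero => rfl
  | succ n ih =>
    rw [Function.iterate_succ_apply, dg, ev, ih (x := Tbeta β x) (Int.fract_nonneg _), floor_cast hβ hx]
    field_simp

theorem digit_le {β x : ℝ} (hβ2 : β < 2) (hx : 0 ≤ x) (hx1 : x < 1) :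
    (⌊β * x⌋).toNat = 0 ∨ (⌊β * x⌋).toNat = 1 := by
  have : ⌊β * x⌋ < 2 := Int.floor_lt.2 (by push_cast; nlinarith)
  omega

theorem dg_drop (β : ℝ) (k n : ℕ) (x : ℝ) :
    (dg β (k + n) x).drop k = dg β n ((Tbeta β)^[k] x) := by
  induction k generalizing x with
  | zero => simp
  | succ k ih =>
    rw [Nat.add_right_comm, dg, List.drop_succ_cons, ih, Function.iterate_succ_apply]

theorem dg_take (β : ℝ) (k n : ℕ) (x : ℝ) :
    (dg β (k + n) x).take k = dg β k x := by
  induction k generalizing x with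
  | zero => simp [dg]
  | succ k ih =>
    rw [Nat.add_right_comm, dg, List.take_succ_cons, ih]; rfl

theorem dg_close {β : ℝ} (hβ : 1 < β) (n : ℕ) {x y : ℝ} (hx : 0 ≤ x) (hy : 0 ≤ y)
    (h : dg β n x = dg β n y) :
    x - y = ((Tbeta β)^[n] x - (Tbeta β)^[n] y) / β ^ n := by
  conv_lhs => rw [← ev_dg hβ n hx, ← ev_dg hβ n hy, h, ev_sub hβ, dg_length]

/-! Facts on `R`. -/

theorem Rr_le_one {β : ℝ} (hβ : 1 < β) (hβ2 : β < 2) (k : ℕ) : Rr β k ≤ 1 := by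
  induction k with
  | zero => simp [Rr]
  | succ k ih => simp only [Rr]; nlinarith

theorem Rr_anti {β : ℝ} (hβ : 1 < β) (hβ2 : β < 2) : Antitone (Rr β) := by
  refine antitone_nat_of_succ_le fun k => ?_
  have := Rr_le_one hβ hβ2 k
  simp only [Rr]; nlinarith

theorem Rr_closed (β : ℝ) (k : ℕ) : Rr β k = β ^ k - ∑ i ∈ Finset.range k, β ^ i := by
  induction k with
  | zero => simp [Rr]
  | succ k ih =>
    rw [Rr, ih, Finset.sum_range_succ', mul_sub, Finset.mul_sum]
    simp only [pow_succ', pow_zero]; ring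

/-- Basic setting. -/
structure Bas (β : ℝ) (m : ℕ) : Prop where
  h1 : 1 < β
  h2 : β < 2
  hm : 1 ≤ m
  hR : Rr β (m + 1) = 0

theorem Bas.Rm {β : ℝ} {m : ℕ} (h : Bas β m) : Rr β m = 1 / β := by
  have := h.hR
  have h1 := h.h1
  rw [Rr] at this
  rw [eq_div_iff (by positivity)]; linarith

theorem Bas.R_ge {β : ℝ} {m : ℕ} (h : Bas β m) {k : ℕ} (hk : k ≤ m) : 1 / β ≤ Rr β k := by
  rw [← h.Rm]; exact Rr_anti h.h1 h.h2 hk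

theorem ones_ev {β : ℝ} (hβ : 1 < β) (j i : ℕ) (e : ℝ) :
    ev β (List.replicate i 1) (Rr β (j + i) + e) = Rr β j + e / β ^ i := by
  have h0 : β ≠ 0 := by positivity
  induction i generalizing j with
  | zero => simp [ev]
  | succ i ih =>
    rw [List.replicate_succ, ev, show j + (i + 1) = j + 1 + i by ring, ih (j + 1), Rr]
    push_cast; rw [pow_succ]; field_simp; ring

theorem ones_adm {β t : ℝ} (hβ : 1 < β) (hβ2 : β < 2) (j i : ℕ) {v : ℝ} (htv : t ≤ v)
    (hv : v < Rr β (j + i)) : Adm β t (List.replicate i 1) v ∧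
      t ≤ ev β (List.replicate i 1) v ∧ ev β (List.replicate i 1) v < Rr β j := by
  induction i generalizing j with
  | zero => exact ⟨trivial, htv, hv⟩
  | succ i ih =>
    rw [show j + (i + 1) = j + 1 + i by ring] at hv
    obtain ⟨a, b, c⟩ := ih (j + 1) hv
    rw [List.replicate_succ]
    set w := ev β (List.replicate i 1) v with hw
    have hR := Rr_le_one hβ hβ2 (j + 1)
    have hRj := Rr_le_one hβ hβ2 j
    have e1 : ev β (1 :: List.replicate i 1) v = (1 + w) / β := by simp [ev, hw]
    have e2 : t ≤ (1 + w) / β := by rw [le_div_iff₀ (by positivity)]; nlinarith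
    have e3 : (1 + w) / β < Rr β j := by
      rw [div_lt_iff₀ (by positivity)]; rw [Rr] at c; linarith
    refine ⟨⟨?_, a⟩, ?_, ?_⟩
    · rw [e1]; exact ⟨e2, by linarith⟩
    · rw [e1]; exact e2
    · rw [e1]; exact e3

/-- Nonstrict version. -/
theorem ones_adm' {β t : ℝ} (hβ : 1 < β) (hβ2 : β < 2) (j i : ℕ) (hj : 1 ≤ j) {v : ℝ} (htv : t ≤ v)
    (hv : v ≤ Rr β (j + i)) : Adm β t (List.replicate i 1) v ∧
      t ≤ ev β (List.replicate i 1) v ∧ ev β (List.replicate i 1) v ≤ Rr β j := by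
  induction i generalizing j with
  | zero => exact ⟨trivial, htv, hv⟩
  | succ i ih =>
    rw [show j + (i + 1) = j + 1 + i by ring] at hv
    obtain ⟨a, b, c⟩ := ih (j + 1) (by omega) hv
    rw [List.replicate_succ]
    set w := ev β (List.replicate i 1) v with hw
    have hR := Rr_le_one hβ hβ2 (j + 1)
    have hRj := Rr_anti hβ hβ2 hj
    have hR1 : Rr β 1 = β - 1 := by simp [Rr]
    have e1 : ev β (1 :: List.replicate i 1) v = (1 + w) / β := by simp [ev, hw]
    have e2 : t ≤ (1 + w) / β := by rw [le_div_iff₀ (by positivity)]; nlinarith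
    have e3 : (1 + w) / β ≤ Rr β j := by
      rw [div_le_iff₀ (by positivity)]; rw [Rr] at c; linarith
    refine ⟨⟨?_, a⟩, ?_, ?_⟩
    · rw [e1]; exact ⟨e2, by linarith⟩
    · rw [e1]; exact e2
    · rw [e1]; exact e3


/-- The word `0 1^m`. -/
def wA (m : ℕ) : List ℕ := 0 :: List.replicate m 1

/-- The word `(0 1^m)^N 0 1^(m-1)`. -/
def wB (m N : ℕ) : List ℕ := powW (wA m) N ++ (0 :: List.replicate (m - 1) 1)

/-- Good words. -/
def Good (β t ε : ℝ) (Q : List ℕ) : Prop :=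
  ∀ v ∈ Ico (1 / β - ε) (1 / β), Adm β t Q v ∧ ev β Q v ∈ Ico (1 / β - ε) (1 / β)

theorem Good_nil (β t ε : ℝ) : Good β t ε [] := fun _ hv => ⟨trivial, hv⟩

theorem Good_append {β t ε : ℝ} {P Q : List ℕ} (hP : Good β t ε P) (hQ : Good β t ε Q) :
    Good β t ε (P ++ Q) := by
  intro v hv
  obtain ⟨a, b⟩ := hQ v hv
  obtain ⟨c, d⟩ := hP _ b
  rw [Adm_append, ev_append]
  exact ⟨⟨c, a⟩, d⟩

theorem Good_pow {β t ε : ℝ} {P : List ℕ} (hP : Good β t ε P) (n : ℕ) :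
    Good β t ε (powW P n) := by
  induction n with
  | zero => exact Good_nil _ _ _
  | succ n ih => exact Good_append hP ih

theorem A_ev {β : ℝ} {m : ℕ} (h : Bas β m) (v : ℝ) :
    ev β (wA m) v = 1 / β + (v - 1 / β) / β ^ (m + 1) := by
  have h0 := h.h1
  have := ones_ev h.h1 0 m (v - 1 / β)
  rw [Nat.zero_add, h.Rm, add_sub_cancel] at this
  rw [wA, ev, this, Rr, pow_succ]
  push_cast; field_simp; ring

theorem A_adm {β t : ℝ} {m : ℕ} (h : Bas β m) {v : ℝ} (htv : t ≤ v) (hv : v < 1 / β) :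
    Adm β t (wA m) v ∧ v ≤ ev β (wA m) v ∧ ev β (wA m) v < 1 / β := by
  have h0 := h.h1
  have hv' : v < Rr β (0 + m) := by rw [Nat.zero_add, h.Rm]; exact hv
  obtain ⟨a, b, c⟩ := ones_adm h.h1 h.h2 0 m htv hv'
  have e := A_ev h v
  have hp : 1 ≤ β ^ (m + 1) := one_le_pow₀ h.h1.le
  have hq : (v - 1 / β) / β ^ (m + 1) < 0 := div_neg_of_neg_of_pos (by linarith) (by positivity)
  have hq2 : v - 1 / β ≤ (v - 1 / β) / β ^ (m + 1) := by
    rw [le_div_iff₀ (by positivity)]; nlinarith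
  have h3 : v ≤ ev β (wA m) v := by linarith
  have h4 : ev β (wA m) v < 1 / β := by linarith
  have h5 : 1 / β < 1 := by rw [div_lt_one (by positivity)]; exact h0
  refine ⟨⟨⟨by change t ≤ ev β (wA m) v; linarith, by change ev β (wA m) v < 1; linarith⟩, a⟩, h3, h4⟩

theorem AN_adm {β t : ℝ} {m : ℕ} (h : Bas β m) {v : ℝ} (htv : t ≤ v) (hv : v < 1 / β) (N : ℕ) :
    Adm β t (powW (wA m) N) v ∧ v ≤ ev β (powW (wA m) N) v ∧ ev β (powW (wA m) N) v < 1 / β ∧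
    1 / β - ev β (powW (wA m) N) v = (1 / β - v) / β ^ ((m + 1) * N) := by
  have h0 := h.h1
  induction N with
  | zero => simp only [powW, ev, Adm]; refine ⟨trivial, le_rfl, hv, by simp⟩
  | succ N ih =>
    obtain ⟨a, b, c, d⟩ := ih
    obtain ⟨a', b', c'⟩ := A_adm h (htv.trans b) c
    rw [powW, Adm_append, ev_append]
    refine ⟨⟨a', a⟩, b.trans b', c', ?_⟩
    rw [A_ev h, show (m + 1) * (N + 1) = (m + 1) * N + (m + 1) by ring, pow_add β ((m + 1) * N),
      ← div_div, ← d]; ring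

/-- Parameters. -/
structure Par (β : ℝ) (m : ℕ) (t ε : ℝ) (N : ℕ) : Prop extends Bas β m where
  ht : 0 < t
  hε : 0 < ε
  ht2 : t + ε ≤ 1 - 1 / β
  hN : 1 / β ^ ((m + 1) * N) ≤ ε

theorem Bas.lt {β : ℝ} {m : ℕ} (h : Bas β m) : 1 - 1 / β < 1 / β := by
  have h0 := h.h1
  have := h.h2
  have : 1 / 2 < 1 / β := one_div_lt_one_div_of_lt (by positivity) this
  linarith

theorem Bas.lt1 {β : ℝ} {m : ℕ} (h : Bas β m) : 1 / β < 1 := by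
  have h0 := h.h1
  rw [div_lt_one (by positivity)]; exact h0

theorem Par.AN {β t ε : ℝ} {m N : ℕ} (h : Par β m t ε N) {v : ℝ} (hv0 : t ≤ v) (hv : v < 1 / β) :
    Adm β t (powW (wA m) N) v ∧ ev β (powW (wA m) N) v ∈ Ico (1 / β - ε) (1 / β) := by
  obtain ⟨a, b, c, d⟩ := AN_adm h.toBas hv0 hv N
  refine ⟨a, ?_, c⟩
  have h0 := h.h1
  have := h.ht
  have h1 : (1 / β - v) / β ^ ((m + 1) * N) ≤ 1 / β ^ ((m + 1) * N) := by
    have := h.toBas.lt1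
    gcongr; linarith
  have := h.hN
  linarith

theorem Par.goodA {β t ε : ℝ} {m N : ℕ} (h : Par β m t ε N) : Good β t ε (wA m) := by
  intro v hv
  have := h.ht2
  have := h.toBas.lt
  obtain ⟨a, b, c⟩ := A_adm h.toBas (t := t) (by linarith [hv.1]) hv.2
  exact ⟨a, by linarith [hv.1], c⟩

theorem Par.B {β t ε : ℝ} {m N : ℕ} (h : Par β m t ε N) {v : ℝ}
    (hv : v ∈ Icc (1 / β - ε) (1 / β)) :
    Adm β t (wB m N) v ∧ ev β (wB m N) v ∈ Ico (1 / β - ε) (1 / β) := by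
  have h0 := h.h1
  have hh := h.ht2
  have hl := h.toBas.lt
  have hl1 := h.toBas.lt1
  have hm := h.hm
  have hm' : 1 + (m - 1) = m := by omega
  have hv' : v ≤ Rr β (1 + (m - 1)) := by rw [hm', h.toBas.Rm]; exact hv.2
  obtain ⟨a, b, c⟩ := ones_adm' h.h1 h.h2 1 (m - 1) le_rfl (t := t) (by linarith [hv.1]) hv'
  have e := ones_ev h.h1 1 (m - 1) (v - 1 / β)
  rw [hm', h.toBas.Rm, add_sub_cancel] at e
  have hR1 : Rr β 1 = β - 1 := by simp [Rr]
  have e1 : ev β (0 :: List.replicate (m - 1) 1) v = 1 - 1 / β + (v - 1 / β) / β ^ m := by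
    have hpm : β ^ m = β ^ (m - 1) * β := by rw [← pow_succ, Nat.sub_add_cancel hm]
    rw [ev, e, hR1, hpm]; push_cast; field_simp; ring
  have e2 : (v - 1 / β) / β ^ m ≤ 0 :=
    div_nonpos_of_nonpos_of_nonneg (by linarith [hv.2]) (by positivity)
  have e3 : -ε ≤ (v - 1 / β) / β ^ m := by
    have hp : 1 ≤ β ^ m := one_le_pow₀ h.h1.le
    rw [le_div_iff₀ (by positivity)]; nlinarith [hv.1, h.hε]
  obtain ⟨a', b'⟩ := h.AN (v := ev β (0 :: List.replicate (m - 1) 1) v)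
    (by rw [e1]; linarith) (by rw [e1]; linarith)
  rw [wB, Adm_append, ev_append]
  exact ⟨⟨a', ⟨by rw [e1]; constructor <;> linarith, a⟩⟩, b'⟩

theorem Par.goodB {β t ε : ℝ} {m N : ℕ} (h : Par β m t ε N) : Good β t ε (wB m N) :=
  fun _ hv => h.B ⟨hv.1, hv.2.le⟩

/-- Filler of length `m |B| + r`. -/
def fil (m N r : ℕ) : List ℕ := powW (wB m N) (m - r) ++ powW (powW (wA m) (N + 1)) r

theorem fil_good {β t ε : ℝ} {m N : ℕ} (h : Par β m t ε N) (r : ℕ) : Good β t ε (fil m N r) :=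
  Good_append (Good_pow h.goodB _) (Good_pow (Good_pow h.goodA _) _)

theorem wA_length (m : ℕ) : (wA m).length = m + 1 := by simp [wA]

theorem wB_length {m : ℕ} (hm : 1 ≤ m) (N : ℕ) : (wB m N).length + 1 = (N + 1) * (m + 1) := by
  simp [wB, powW_length, wA_length]
  rw [Nat.sub_add_cancel hm]; ring

theorem fil_length {m r : ℕ} (hm : 1 ≤ m) (hr : r ≤ m) (N : ℕ) :
    (fil m N r).length = m * (wB m N).length + r := by
  rw [fil, List.length_append, powW_length, powW_length, powW_length, wA_length, ← wB_length hm N]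
  obtain ⟨k, rfl⟩ := Nat.exists_eq_add_of_le hr
  rw [Nat.add_sub_cancel_left]; ring

theorem core {β t ε T : ℝ} {m : ℕ} (h : Bas β m) (hε : 0 < ε) (_hT : 0 ≤ T) (hTt : t + ε ≤ T)
    (n : ℕ) : ∀ (x : ℝ) (k : ℕ), x ∈ Kset β T → x < Rr β k → k ≤ m →
    ∃ j ≤ m, (Tbeta β)^[n] x < Rr β j ∧ ∀ z, z < Rr β j → (Tbeta β)^[n] x - ε ≤ z →
      Adm β t (dg β n x) z ∧ ev β (dg β n x) z < Rr β k ∧ x - ε ≤ ev β (dg β n x) z := by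
  have h0 := h.h1
  induction n with
  | zero => intro x k _ hxk hk; exact ⟨k, hk, hxk, fun z hz1 hz2 => ⟨trivial, hz1, hz2⟩⟩
  | succ n ih =>
    intro x k hx hxk hk
    have hTx : Tbeta β x ∈ Kset β T := Kset_iter hx 1
    have hfl := floor_cast h.h1 hx.1.1
    have hxT : T ≤ x := hx.2 0
    have key : ∃ k', k' ≤ m ∧ Tbeta β x < Rr β k' ∧
        ∀ w, w < Rr β k' → (((⌊β * x⌋).toNat : ℕ) + w) / β < Rr β k := by
      rcases digit_le h.h2 hx.1.1 hx.1.2 with hd | hd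
      · refine ⟨0, by omega, by simpa [Rr] using hTx.1.2, fun w hw => ?_⟩
        rw [hd]
        refine lt_of_lt_of_le ?_ (h.R_ge hk)
        push_cast; gcongr; simpa [Rr] using hw
      · rw [hd] at hfl
        push_cast at hfl
        have h3 : Tbeta β x < Rr β (k + 1) := by rw [Rr]; nlinarith
        have h4 : k ≠ m := by
          rintro rfl; rw [h.hR] at h3; linarith [hTx.1.1]
        refine ⟨k + 1, by omega, h3, fun w hw => ?_⟩
        rw [hd, div_lt_iff₀ (by positivity)]
        rw [Rr] at hw; push_cast; linarith
    obtain ⟨k', hk', hTk, hw⟩ := key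
    obtain ⟨j, hj, hj2, hj3⟩ := ih (Tbeta β x) k' hTx hTk hk'
    refine ⟨j, hj, by rwa [Function.iterate_succ_apply], fun z hz1 hz2 => ?_⟩
    rw [Function.iterate_succ_apply] at hz2
    obtain ⟨a, b, c⟩ := hj3 z hz1 hz2
    have e1 := hw _ b
    have e2 : x - ε ≤ (((⌊β * x⌋).toNat : ℕ) + ev β (dg β n (Tbeta β x)) z) / β := by
      rw [le_div_iff₀ (by positivity)]; nlinarith
    have := Rr_le_one h.h1 h.h2 k
    refine ⟨⟨⟨?_, ?_⟩, a⟩, ?_, ?_⟩ <;> simp only [dg, ev] <;> linarith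

theorem lead {β : ℝ} {m : ℕ} (h : Bas β m) (n : ℕ) : ∀ (x : ℝ) (k : ℕ), 0 ≤ x → x < 1 → x < Rr β k →
    k ≤ m → m + 1 ≤ n + k → ∃ r, r + k ≤ m ∧ ∃ a, dg β n x = List.replicate r 1 ++ 0 :: a := by
  induction n with
  | zero => intro x k _ _ _ hk hn; omega
  | succ n ih =>
    intro x k hx hx1 hxk hk hn
    have h0 := h.h1
    have hfl := floor_cast h.h1 hx
    have hT0 : 0 ≤ Tbeta β x := Int.fract_nonneg _
    have hT1 : Tbeta β x < 1 := Int.fract_lt_one _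
    rcases digit_le h.h2 hx hx1 with hd | hd
    · exact ⟨0, by omega, dg β n (Tbeta β x), by simp [dg, hd]⟩
    · rw [hd] at hfl
      push_cast at hfl
      have h3 : Tbeta β x < Rr β (k + 1) := by rw [Rr]; nlinarith
      have h4 : k ≠ m := by
        rintro rfl; rw [h.hR] at h3; linarith
      obtain ⟨r, hr, a, ha⟩ := ih (Tbeta β x) (k + 1) hT0 hT1 h3 (by omega) (by omega)
      exact ⟨r + 1, by omega, a, by simp [dg, hd, ha, List.replicate_succ]⟩

theorem Qex {β t ε T : ℝ} {m N : ℕ} (h : Par β m t ε N) (hT : t + ε ≤ T) {x : ℝ}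
    (hx : x ∈ Kset β T) {n : ℕ} (hn : m + 1 ≤ n) :
    ∃ P S : List ℕ, P.length = m * (wB m N).length + N * (m + 1) + (m + 1) ∧
      S.length = m * (wB m N).length + m ∧ Good β t ε (P ++ dg β n x ++ S) := by
  have h0 := h.h1
  have hε := h.hε
  have ht := h.ht
  have hb := h.toBas
  obtain ⟨r, hr, a, ha⟩ := lead hb n x 0 hx.1.1 hx.1.2 (by simpa [Rr] using hx.1.2) (by omega)
    (by omega)
  obtain ⟨j, hj, hj2, hj3⟩ := core hb hε (by linarith) hT n x 0 hx (by simpa [Rr] using hx.1.2)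
    (by omega)
  refine ⟨fil m N r ++ (powW (wA m) N ++ (0 :: List.replicate (m - r) 1)),
    List.replicate (m - j) 1 ++ fil m N j, ?_, ?_, ?_⟩
  · simp only [List.length_append, fil_length h.hm (by omega : r ≤ m), powW_length, wA_length,
      List.length_cons, List.length_replicate]
    omega
  · simp only [List.length_append, fil_length h.hm hj, List.length_replicate]
    omega
  rw [List.append_assoc, List.append_assoc]
  intro v hv
  -- the right filler
  obtain ⟨f1, f2⟩ := fil_good h j v hv
  set u := ev β (fil m N j) v with hu
  have hl := hb.lt
  have ht2 := h.ht2
  have hmj : j + (m - j) = m := by omega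
  obtain ⟨g1, g2, g3⟩ := ones_adm h.h1 h.h2 j (m - j) (t := t) (v := u) (by linarith [f2.1])
    (by rw [hmj, hb.Rm]; exact f2.2)
  have g4 := ones_ev h.h1 j (m - j) (u - 1 / β)
  rw [hmj, hb.Rm, add_sub_cancel] at g4
  set z := ev β (List.replicate (m - j) 1) u with hz
  have g5 : -ε ≤ (u - 1 / β) / β ^ (m - j) := by
    have hp : 1 ≤ β ^ (m - j) := one_le_pow₀ h.h1.le
    rw [le_div_iff₀ (by positivity)]; nlinarith [f2.1]
  obtain ⟨c1, c2, c3⟩ := hj3 z g3 (by linarith)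
  have hz1 : z < 1 := lt_of_lt_of_le g3 (Rr_le_one h.h1 h.h2 j)
  -- the core
  set y := ev β (dg β n x) z with hy
  have hxT : T ≤ x := hx.2 0
  have hyt : t ≤ y := by linarith
  have hz0 : 0 ≤ z := by linarith
  have c1' := c1
  rw [ha, Adm_append] at c1'
  have d1 : ev β (0 :: a) z < 1 / β := by
    have := Adm_lt c1'.2.2 hz1
    simp only [ev]; push_cast; gcongr; linarith
  have d0 : 0 ≤ ev β (0 :: a) z := ev_nonneg h.h1 _ hz0
  have hyr : y = ev β (List.replicate r 1) (ev β (0 :: a) z) := by rw [hy, ha, ev_append]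
  have hym : y < Rr β (m - r) := by
    have := ev_lt h.h1 (List.replicate r 1) d1
    have e := ones_ev h.h1 (m - r) r 0
    rw [Nat.sub_add_cancel (by omega : r ≤ m), hb.Rm] at e
    simp at e
    rw [hyr, ← e]; simpa using this
  obtain ⟨p1, p2, p3⟩ := ones_adm h.h1 h.h2 0 (m - r) hyt (by rwa [Nat.zero_add])
  set q := ev β (List.replicate (m - r) 1) y with hq
  have hq1 : β - 1 ≤ q := by
    rw [hq, hyr, ← ev_append, ← List.replicate_add, Nat.sub_add_cancel (by omega : r ≤ m)]
    have e := ones_ev h.h1 1 m (ev β (0 :: a) z)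
    rw [Nat.add_comm 1 m, hb.hR, zero_add] at e
    rw [e]
    have : 0 ≤ ev β (0 :: a) z / β ^ m := by positivity
    simp [Rr]; linarith
  have e0 : ev β (0 :: List.replicate (m - r) 1) y = q / β := by simp [ev, hq]
  have e1 : 1 - 1 / β ≤ q / β := by
    rw [le_div_iff₀ (by positivity)]; field_simp; linarith
  have e2 : q / β < 1 / β := by gcongr; simpa [Rr] using p3
  have hl1 := hb.lt1
  obtain ⟨k1, k2⟩ := h.AN (v := q / β) (by linarith) e2
  obtain ⟨l1, l2⟩ := fil_good h r _ k2
  simp only [Adm_append, ev_append, ← hu, ← hz, ← hy]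
  rw [e0]
  refine ⟨⟨l1, ⟨k1, ⟨⟨?_, ?_⟩, p1⟩⟩, c1, g1, f1⟩, l2⟩ <;> rw [e0] <;> linarith


/-- Strongly good words. -/
def SGood (β t ε : ℝ) (Q : List ℕ) : Prop :=
  ∀ v ∈ Icc (1 / β - ε) (1 / β), Adm β t Q v ∧ ev β Q v ∈ Ico (1 / β - ε) (1 / β)

theorem cantor {β t ε : ℝ} (hβ : 1 < β) (hε : 0 < ε) {ι : Type*} {X : ι → List ℕ} {L : ℕ}
    (hL : 1 ≤ L) (hX : ∀ i, (X i).length = L) (hG : ∀ i, SGood β t ε (X i)) :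
    ∃ g : (ℕ → ι) → ℝ, ∀ ω, g ω ∈ Ico (1 / β - ε) (1 / β) ∧
      g ω = ev β (X (ω 0)) (g (fun k => ω (k + 1))) := by
  set b := β ^ L with hb
  have hb1 : 1 < b := one_lt_pow₀ hβ (by omega)
  have hb0 : 0 < b := by linarith
  have hev : ∀ i v, ev β (X i) v = ev β (X i) 0 + v / b := by
    intro i v
    have := ev_sub hβ (X i) v 0
    rw [hX i, sub_zero] at this; linarith
  obtain ⟨C, hC⟩ : ∃ C, ∀ i, |ev β (X i) 0| ≤ C := by
    refine ⟨1 / β + ε + (1 / β) / b, fun i => ?_⟩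
    have h1 := (hG i (1 / β) ⟨by linarith, le_rfl⟩).2
    rw [hev] at h1
    have : 0 < 1 / β := by positivity
    have : 0 < 1 / β / b := by positivity
    rw [abs_le]; constructor <;> linarith [h1.1, h1.2]
  have hsum : ∀ ω : ℕ → ι, Summable (fun k => ev β (X (ω k)) 0 / b ^ k) := by
    intro ω
    refine Summable.of_norm_bounded (g := fun k => C * (b⁻¹) ^ k) ?_ ?_
    · exact (summable_geometric_of_lt_one (by positivity) (inv_lt_one_of_one_lt₀ hb1)).mul_left _
    · intro k
      rw [Real.norm_eq_abs, abs_div, abs_of_pos (by positivity : 0 < b ^ k), inv_pow, ← div_eq_mul_inv]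
      gcongr; exact hC _
  let g : (ℕ → ι) → ℝ := fun ω => ∑' k, ev β (X (ω k)) 0 / b ^ k
  have hrec : ∀ ω, g ω = ev β (X (ω 0)) (g (fun k => ω (k + 1))) := by
    intro ω
    rw [hev]
    change ∑' k, ev β (X (ω k)) 0 / b ^ k = _ + (∑' k, ev β (X (ω (k + 1))) 0 / b ^ k) / b
    rw [(hsum ω).tsum_eq_zero_add, ← tsum_div_const]
    simp only [pow_zero, div_one, pow_succ, div_div]
  have hfin : ∀ n (ω : ℕ → ι), ∑ k ∈ Finset.range n, ev β (X (ω k)) 0 / b ^ k + (1 / β) / b ^ n ∈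
      Icc (1 / β - ε) (1 / β) := by
    intro n
    induction n with
    | zero => intro ω; simp; linarith
    | succ n ih =>
      intro ω
      have h1 := (hG (ω 0) _ (ih (fun k => ω (k + 1)))).2
      rw [hev] at h1
      rw [Finset.sum_range_succ']
      have e : ev β (X (ω 0)) 0 + (∑ k ∈ Finset.range n, ev β (X (ω (k + 1))) 0 / b ^ k
          + 1 / β / b ^ n) / b = ∑ k ∈ Finset.range n, ev β (X (ω (k + 1))) 0 / b ^ (k + 1)
          + ev β (X (ω 0)) 0 / b ^ 0 + 1 / β / b ^ (n + 1) := by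
        rw [add_div, Finset.sum_div]
        simp only [pow_succ, div_div, pow_zero, one_mul, div_one]; ring
      rw [← e]
      exact ⟨h1.1, h1.2.le⟩
  have hcl : ∀ ω, g ω ∈ Icc (1 / β - ε) (1 / β) := by
    intro ω
    have h1 := (hsum ω).hasSum.tendsto_sum_nat
    have h2 : Tendsto (fun n : ℕ => (1 / β) / b ^ n) atTop (nhds 0) := by
      have := (tendsto_pow_atTop_nhds_zero_of_lt_one (by positivity)
        (inv_lt_one_of_one_lt₀ hb1)).const_mul (1 / β)
      simpa [div_eq_mul_inv] using this
    have h3 := h1.add h2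
    rw [add_zero] at h3
    exact isClosed_Icc.mem_of_tendsto h3 (Eventually.of_forall fun n => hfin n ω)
  refine ⟨g, fun ω => ⟨?_, hrec ω⟩⟩
  rw [hrec]
  exact (hG _ _ (hcl _)).2

theorem cantor_mem {β t ε : ℝ} (hβ : 1 < β) (ht : 0 ≤ t) (hte : t ≤ 1 / β - ε)
    {ι : Type*} {X : ι → List ℕ} {L : ℕ}
    (hL : 1 ≤ L) (hX : ∀ i, (X i).length = L) (hG : ∀ i, SGood β t ε (X i))
    {g : (ℕ → ι) → ℝ} (hg : ∀ ω, g ω ∈ Ico (1 / β - ε) (1 / β) ∧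
      g ω = ev β (X (ω 0)) (g (fun k => ω (k + 1)))) (ω : ℕ → ι) : g ω ∈ Kset β t := by
  have hβ1 : 1 / β < 1 := by rw [div_lt_one (by positivity)]; exact hβ
  have hb : ∀ ω, t ≤ g ω ∧ g ω < 1 := fun ω =>
    ⟨hte.trans (hg ω).1.1, (hg ω).1.2.trans hβ1⟩
  refine ⟨⟨ht.trans (hb ω).1, (hb ω).2⟩, fun n => ?_⟩
  induction n using Nat.strong_induction_on generalizing ω with
  | _ n ih =>
    have h1 := hg (fun k => ω (k + 1))
    obtain ⟨h2, h3⟩ := Adm_iter hβ ht (hG (ω 0) _ ⟨h1.1.1, h1.1.2.le⟩).1 (hb _).1 (hb _).2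
    rw [(hg ω).2]
    rw [hX] at h2 h3
    rcases le_total n L with hn | hn
    · exact (h3 n hn).1
    · obtain ⟨k, rfl⟩ := Nat.exists_eq_add_of_le' hn
      rw [Function.iterate_add_apply, h2]
      exact ih k (by omega) _

theorem word_sep {β t : ℝ} (hβ : 1 < β) (ht : 0 < t) : ∀ (w w' : List ℕ) (v v' : ℝ),
    w.length = w'.length → w ≠ w' → Adm β t w v → Adm β t w' v' → t ≤ v → v < 1 → t ≤ v' → v' < 1 →
    t / β ^ w.length ≤ |ev β w v - ev β w' v'| := by
  intro w
  induction w with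
  | nil => intro w' v v' hl hne; exact absurd (List.length_eq_zero_iff.1 hl.symm).symm hne
  | cons d w ih =>
    intro w' v v' hl hne h h' hv hv1 hv' hv1'
    cases w' with
    | nil => simp at hl
    | cons d' w' =>
      have a1 := Adm_ge h.2 hv
      have a2 := Adm_lt h.2 hv1
      have b1 := Adm_ge h'.2 hv'
      have b2 := Adm_lt h'.2 hv1'
      have e : ev β (d :: w) v - ev β (d' :: w') v' = (d - d' + (ev β w v - ev β w' v')) / β := by
        simp only [ev]; ring
      rw [e, abs_div, abs_of_pos (by positivity : 0 < β), List.length_cons, pow_succ, ← div_div]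
      gcongr
      have hle : t / β ^ w.length ≤ t := div_le_self ht.le (one_le_pow₀ hβ.le)
      rcases lt_trichotomy d d' with hd | hd | hd
      · have : (d : ℝ) + 1 ≤ d' := by exact_mod_cast hd
        rw [abs_of_neg (by linarith)]; linarith
      · subst hd
        rw [sub_self, zero_add]
        exact ih w' v v' (by simpa using hl) (by simpa using hne) h.2 h'.2 hv hv1 hv' hv1'
      · have : (d' : ℝ) + 1 ≤ d := by exact_mod_cast hd
        rw [abs_of_pos (by linarith)]; linarith

theorem inv_pow_comm_aux {b ρ : ℝ} {q : ℕ} (hb : 0 ≤ b) : ((b ^ ρ) ^ q)⁻¹ = ((b ^ q) ^ ρ)⁻¹ := by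
  rw [← Real.rpow_natCast (b ^ ρ) q, ← Real.rpow_natCast b q, ← Real.rpow_mul hb,
    ← Real.rpow_mul hb, mul_comm]

theorem lower {β t ε : ℝ} (hβ : 1 < β) (ht : 0 < t) (hε : 0 < ε) (hte : t ≤ 1 / β - ε)
    {M : ℕ} (hM : 1 < M) {X : Fin M → List ℕ} (hinj : Function.Injective X) {L : ℕ}
    (hL : 1 ≤ L) (hX : ∀ i, (X i).length = L) (hG : ∀ i, SGood β t ε (X i)) :
    ENNReal.ofReal (Real.log M / (L * Real.log β)) ≤ dimH (Kset β t) := by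
  obtain ⟨g, hg⟩ := cantor hβ hε hL hX hG
  have hmem := cantor_mem hβ ht.le hte hL hX hG hg
  have hβ1 : 1 / β < 1 := by rw [div_lt_one (by positivity)]; exact hβ
  set ρ := Real.log M / (L * Real.log β) with hρ
  have hlβ : 0 < Real.log β := Real.log_pos hβ
  have hlM : 0 < Real.log M := Real.log_pos (by exact_mod_cast hM)
  have hL0 : (0 : ℝ) < L := by exact_mod_cast hL
  have hρ0 : 0 < ρ := by positivity
  have hMρ : (M : ℝ) = (β ^ L) ^ ρ := by
    have hM0 : (0 : ℝ) < M := by positivity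
    rw [Real.rpow_def_of_pos (by positivity), Real.log_pow, hρ, mul_div_cancel₀ _ (by positivity),
      Real.exp_log hM0]
  -- separation
  have hsep : ∀ (q : ℕ) (ω ω' : ℕ → Fin M), (∀ i < q, ω i = ω' i) → ω q ≠ ω' q →
      t / (β ^ L) ^ (q + 1) ≤ |g ω - g ω'| := by
    intro q
    induction q with
    | zero =>
      intro ω ω' _ hne
      rw [(hg ω).2, (hg ω').2]
      have h1 := (hg (fun k => ω (k + 1))).1
      have h2 := (hg (fun k => ω' (k + 1))).1
      have := word_sep hβ ht (X (ω 0)) (X (ω' 0)) (g (fun k => ω (k + 1))) (g (fun k => ω' (k + 1)))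
        (by rw [hX, hX]) (fun h => hne (hinj h)) (hG _ _ ⟨h1.1, h1.2.le⟩).1
        (hG _ _ ⟨h2.1, h2.2.le⟩).1 (hte.trans h1.1) (h1.2.trans hβ1) (hte.trans h2.1)
        (h2.2.trans hβ1)
      rwa [hX, ← pow_one (β ^ L)] at this
    | succ q ih =>
      intro ω ω' he hne
      rw [(hg ω).2, (hg ω').2, ← he 0 (by omega), ev_sub hβ, hX, abs_div,
        abs_of_pos (by positivity : 0 < β ^ L), pow_succ, ← div_div]
      gcongr
      exact ih (fun k => ω (k + 1)) (fun k => ω' (k + 1)) (fun i hi => he _ (by omega)) hne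
  set C : ℝ := (β ^ L / t) ^ ρ with hC
  have hC0 : 0 ≤ C := by positivity
  have hhol : ∀ ω ω', |Real.ofDigits ω - Real.ofDigits ω'| ≤ C * |g ω - g ω'| ^ ρ := by
    intro ω ω'
    by_cases hωω : ω = ω'
    · subst hωω; simp; positivity
    · have hex : ∃ q, ω q ≠ ω' q := by
        by_contra hcon; push Not at hcon; exact hωω (funext hcon)
      classical
      have h1 := Nat.find_spec hex
      have h2 : ∀ i < Nat.find hex, ω i = ω' i := fun i hi => by
        have := Nat.find_min hex hi; simpa using this
      set q := Nat.find hex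
      refine (Real.abs_ofDigits_sub_ofDigits_le h2).trans ?_
      have h3 := hsep q ω ω' h2 h1
      have h4 : (t / (β ^ L) ^ (q + 1)) ^ ρ ≤ |g ω - g ω'| ^ ρ :=
        Real.rpow_le_rpow (by positivity) h3 hρ0.le
      refine le_trans (le_of_eq ?_) (mul_le_mul_of_nonneg_left h4 hC0)
      rw [hC, ← Real.mul_rpow (by positivity) (by positivity), hMρ]
      have : β ^ L / t * (t / (β ^ L) ^ (q + 1)) = ((β ^ L) ^ q)⁻¹ := by
        rw [pow_succ]; field_simp
      have hb0 : 0 ≤ β ^ L := by positivity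
      rw [this, Real.inv_rpow (by positivity), inv_pow_comm_aux hb0]
  have : Nonempty (ℕ → Fin M) := ⟨fun _ => ⟨0, by omega⟩⟩
  let f : ℝ → ℝ := fun x => Real.ofDigits (Function.invFun g x)
  have hf : ∀ ω, f (g ω) = Real.ofDigits ω := by
    intro ω
    have h1 : g (Function.invFun g (g ω)) = g ω := Function.invFun_eq ⟨ω, rfl⟩
    have h2 := hhol (Function.invFun g (g ω)) ω
    rw [h1, sub_self, abs_zero, Real.zero_rpow hρ0.ne', mul_zero] at h2
    have := abs_nonpos_iff.1 h2
    change Real.ofDigits (Function.invFun g (g ω)) = _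
    linarith
  have hH : HolderOnWith C.toNNReal ρ.toNNReal f (range g) := by
    rintro _ ⟨ω, rfl⟩ _ ⟨ω', rfl⟩
    rw [hf, hf, edist_dist, edist_dist, Real.dist_eq, Real.dist_eq, Real.coe_toNNReal _ hρ0.le,
      ENNReal.ofReal_rpow_of_nonneg (abs_nonneg _) hρ0.le]
    change _ ≤ ENNReal.ofReal C * _
    rw [← ENNReal.ofReal_mul hC0]
    exact ENNReal.ofReal_le_ofReal (hhol ω ω')
  have h1 := hH.dimH_image_le (by simpa using hρ0)
  have h2 : (1 : ENNReal) ≤ dimH (f '' range g) := by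
    have h3 : Icc (0 : ℝ) 1 ⊆ f '' range g := by
      intro y hy
      obtain ⟨ω, _, hω⟩ := Real.ofDigits_SurjOn hM hy
      exact ⟨g ω, ⟨ω, rfl⟩, by rw [hf, hω]⟩
    have h4 : dimH (Icc (0 : ℝ) 1) = 1 := by
      have := Real.dimH_of_mem_nhds (E := ℝ) (x := 1 / 2) (s := Icc (0 : ℝ) 1)
        (Icc_mem_nhds (by norm_num) (by norm_num))
      simpa using this
    rw [← h4]; exact dimH_mono h3
  have h5 := h2.trans h1
  have h6 : ENNReal.ofReal ρ ≤ dimH (range g) := by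
    rw [ENNReal.le_div_iff_mul_le (Or.inl (by simpa using hρ0)) (Or.inl (by simp))] at h5
    simpa [ENNReal.ofReal] using h5
  refine h6.trans (dimH_mono ?_)
  rintro _ ⟨ω, rfl⟩; exact hmem ω


def Wd (β t : ℝ) (n : ℕ) : Set (List ℕ) := (dg β n) '' Kset β t

theorem dg_digits {β t : ℝ} (hβ2 : β < 2) (n : ℕ) : ∀ x ∈ Kset β t, ∀ a ∈ dg β n x, a ≤ 1 := by
  induction n with
  | zero => intro x _ a ha; simp [dg] at ha
  | succ n ih =>
    intro x hx a ha
    simp only [dg, List.mem_cons] at ha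
    rcases ha with rfl | ha
    · have := digit_le hβ2 hx.1.1 hx.1.2; omega
    · exact ih _ (Kset_iter hx 1) a ha

theorem Wd_finite {β : ℝ} (hβ2 : β < 2) (t : ℝ) (n : ℕ) : (Wd β t n).Finite := by
  have h1 : (Wd β t n) ⊆ range (fun f : Fin n → Fin 2 => List.ofFn (fun i => (f i : ℕ))) := by
    rintro _ ⟨x, hx, rfl⟩
    have hl := dg_length β n x
    refine ⟨fun i => ⟨(dg β n x)[(i : ℕ)]'(by rw [hl]; exact i.2), ?_⟩, ?_⟩
    · have := dg_digits hβ2 n x hx _ (List.getElem_mem (l := dg β n x) (n := i) (by rw [hl]; exact i.2))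
      omega
    · apply List.ext_getElem
      · simp [hl]
      · intro i h1 h2; simp
  exact (finite_range _).subset h1

theorem close_iter {β t : ℝ} (hβ : 1 < β) (n k : ℕ) : ∀ x ∈ Kset β t, ∀ y ∈ Kset β t,
    (∀ i < k, dg β n ((Tbeta β)^[n * i] x) = dg β n ((Tbeta β)^[n * i] y)) →
    |x - y| ≤ 1 / (β ^ n) ^ k := by
  induction k with
  | zero =>
    intro x hx y hy _
    have h1 := hx.1; have h2 := hy.1
    simp only [pow_zero, div_one, abs_le, mem_Ico] at *
    constructor <;> linarith
  | succ k ih =>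
    intro x hx y hy h
    have h0 := h 0 (by omega)
    simp only [mul_zero, Function.iterate_zero, id] at h0
    rw [dg_close hβ n hx.1.1 hy.1.1 h0, abs_div, abs_of_pos (by positivity : 0 < β ^ n), pow_succ,
      ← div_div]
    gcongr
    refine ih _ (Kset_iter hx n) _ (Kset_iter hy n) (fun i hi => ?_)
    have := h (i + 1) (by omega)
    rwa [mul_add, mul_one, Function.iterate_add_apply, Function.iterate_add_apply] at this

theorem upper {β t : ℝ} (hβ : 1 < β) (hβ2 : β < 2) (hne : (Kset β t).Nonempty) {n : ℕ} (hn : 1 ≤ n) :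
    dimH (Kset β t) ≤ ENNReal.ofReal (Real.log (Nat.card (Wd β t n)) / (n * Real.log β)) := by
  have hfin := Wd_finite hβ2 t n
  have : Fintype (Wd β t n) := hfin.fintype
  set M := Nat.card (Wd β t n) with hM
  have hM0 : 1 ≤ M := by
    obtain ⟨x, hx⟩ := hne
    have : Nonempty (Wd β t n) := ⟨⟨_, x, hx, rfl⟩⟩
    exact Nat.card_pos
  have hMr : (1 : ℝ) ≤ M := by exact_mod_cast hM0
  have hlβ : 0 < Real.log β := Real.log_pos hβ
  have hn0 : (0 : ℝ) < n := by exact_mod_cast hn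
  set d := Real.log M / (n * Real.log β) with hd
  have hd0 : 0 ≤ d := div_nonneg (Real.log_nonneg hMr) (by positivity)
  have hMd : (M : ℝ) = (β ^ n) ^ d := by
    rw [Real.rpow_def_of_pos (by positivity), Real.log_pow, hd, mul_div_cancel₀ _ (by positivity),
      Real.exp_log (by linarith)]
  have hbn : 1 < β ^ n := one_lt_pow₀ hβ (by omega)
  have key : Measure.hausdorffMeasure d (Kset β t) ≤ 1 := by
    let E : ∀ k : ℕ, (Fin k → Wd β t n) → Set ℝ := fun k w =>
      {x | x ∈ Kset β t ∧ ∀ i : Fin k, dg β n ((Tbeta β)^[n * i] x) = w i}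
    have hE : ∀ k w, Metric.ediam (E k w) ≤ ENNReal.ofReal (1 / (β ^ n) ^ k) := by
      intro k w
      apply Metric.ediam_le
      intro x hx y hy
      rw [edist_dist, Real.dist_eq]
      apply ENNReal.ofReal_le_ofReal
      refine close_iter hβ n k x hx.1 y hy.1 (fun i hi => ?_)
      rw [hx.2 ⟨i, hi⟩, hy.2 ⟨i, hi⟩]
    refine (Measure.hausdorffMeasure_le_liminf_sum (l := atTop) d (Kset β t)
      (fun k : ℕ => ENNReal.ofReal (1 / (β ^ n) ^ k)) ?_ E (Eventually.of_forall hE)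
      (Eventually.of_forall ?_)).trans ?_
    · rw [← ENNReal.ofReal_zero]
      apply ENNReal.tendsto_ofReal
      have := tendsto_pow_atTop_nhds_zero_of_lt_one (r := (β ^ n)⁻¹) (by positivity)
        (inv_lt_one_of_one_lt₀ hbn)
      simpa [one_div, inv_pow] using this
    · intro k x hx
      refine mem_iUnion.2 ⟨fun i => ⟨_, _, Kset_iter hx (n * i), rfl⟩, hx, fun i => rfl⟩
    · have hs : ∀ k, ∑ w, Metric.ediam (E k w) ^ d ≤ 1 := by
        intro k
        calc ∑ w, Metric.ediam (E k w) ^ d ≤ ∑ w : Fin k → Wd β t n, ENNReal.ofReal (1 / (β ^ n) ^ k) ^ d := by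
              gcongr with w; exact hE k w
          _ = 1 := by
              rw [Finset.sum_const, Finset.card_univ, Fintype.card_fun, Fintype.card_fin,
                ← Nat.card_eq_fintype_card, ← hM, nsmul_eq_mul,
                ENNReal.ofReal_rpow_of_nonneg (by positivity) hd0,
                ← ENNReal.ofReal_natCast, ← ENNReal.ofReal_mul (by positivity), one_div,
                Real.inv_rpow (by positivity), ← inv_pow_comm_aux (by positivity), ← hMd]
              push_cast
              rw [mul_inv_cancel₀ (by positivity), ENNReal.ofReal_one]
      calc liminf (fun k => ∑ w, Metric.ediam (E k w) ^ d) atTop ≤ liminf (fun _ : ℕ => (1 : ENNReal)) atTop :=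
            liminf_le_liminf (Eventually.of_forall hs)
        _ = 1 := by simp
  have := dimH_le_of_hausdorffMeasure_ne_top (s := Kset β t) (d := d.toNNReal)
    (by rw [Real.coe_toNNReal _ hd0]; exact ne_top_of_le_ne_top ENNReal.one_ne_top key)
  exact this

theorem dimH_lt_top' (s : Set ℝ) : dimH s ≠ ⊤ := by
  have h := dimH_mono (subset_univ s)
  rw [Real.dimH_univ] at h
  exact ne_top_of_le_ne_top ENNReal.one_ne_top h

theorem upper' {β t : ℝ} (hβ : 1 < β) (hβ2 : β < 2) (hne : (Kset β t).Nonempty) {n : ℕ} (hn : 1 ≤ n) :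
    n * ((dimH (Kset β t)).toReal * Real.log β) ≤ Real.log (Nat.card (Wd β t n)) := by
  have hlβ : 0 < Real.log β := Real.log_pos hβ
  have hn0 : (0 : ℝ) < n := by exact_mod_cast hn
  have h := ENNReal.toReal_mono ENNReal.ofReal_ne_top (upper hβ hβ2 hne hn)
  rw [ENNReal.toReal_ofReal (div_nonneg (Real.log_natCast_nonneg _) (by positivity)),
    le_div_iff₀ (by positivity)] at h
  linarith


theorem slice {A B C Y : List ℕ} {o n u : ℕ} (h : Y = A ++ B ++ C) (ho : o = A.length + u)
    (hn : u + n ≤ B.length) : (Y.drop o).take n = (B.drop u).take n := by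
  subst h ho
  rw [List.append_assoc, List.drop_append, List.drop_eq_nil_of_le (by omega), List.nil_append,
    Nat.add_sub_cancel_left, List.drop_append_of_le_length (by omega),
    List.take_append_of_le_length (by rw [List.length_drop]; omega)]

theorem slice' {A B C Y : List ℕ} {o n : ℕ} (h : Y = A ++ B ++ C) (ho : o = A.length)
    (hn : n = B.length) : (Y.drop o).take n = B := by
  rw [slice h (u := 0) (by omega) (by omega), hn]; simp

theorem SGood_append {β t ε : ℝ} {m N : ℕ} (h : Par β m t ε N) {Q : List ℕ} (hQ : Good β t ε Q) :
    SGood β t ε (Q ++ wB m N) := by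
  intro v hv
  have h1 := h.B hv
  have h2 := hQ _ h1.2
  rw [Adm_append, ev_append]
  exact ⟨⟨h2.1, h1.1⟩, h2.2⟩

theorem dg_slice {β x : ℝ} {a : List ℕ} {n u n' : ℕ} (ha : dg β n x = a) (h : u + n' ≤ n) :
    (a.drop u).take n' = dg β n' ((Tbeta β)^[u] x) := by
  obtain ⟨r, rfl⟩ := Nat.exists_eq_add_of_le h
  rw [← ha, add_assoc, dg_drop, dg_take]

set_option maxHeartbeats 2000000 in
theorem thmG {β t1 ts t2 xs : ℝ} {m : ℕ} (hb : Bas β m) (h0 : 0 < t1) (h1 : t1 < ts) (h2 : ts ≤ t2)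
    (h3 : t1 < 1 - 1 / β) (hne : (Kset β t2).Nonempty) (hxs : xs ∈ Kset β ts) (hxt : xs < t2) :
    dimH (Kset β t2) < dimH (Kset β t1) := by
  have hβ := hb.h1
  have hβ2 := hb.h2
  obtain ⟨ε, hε, hε1, hε2⟩ : ∃ ε > 0, ε ≤ ts - t1 ∧ ε ≤ 1 - 1 / β - t1 :=
    ⟨min (ts - t1) (1 - 1 / β - t1), lt_min (by linarith) (by linarith), min_le_left _ _, min_le_right _ _⟩
  have htend : Tendsto (fun n : ℕ => 1 / β ^ n) atTop (nhds 0) := by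
    have := tendsto_pow_atTop_nhds_zero_of_lt_one (r := β⁻¹) (by positivity) (inv_lt_one_of_one_lt₀ hβ)
    simpa [one_div, inv_pow] using this
  obtain ⟨N, hN⟩ : ∃ N : ℕ, 1 / β ^ ((m + 1) * N) ≤ ε := by
    obtain ⟨N, hN⟩ := ((htend.eventually (gt_mem_nhds hε))).exists
    refine ⟨N, le_trans ?_ hN.le⟩
    gcongr
    · exact hβ.le
    · nlinarith
  have hp : Par β m t1 ε N := { hb with ht := h0, hε := hε, ht2 := by linarith, hN := hN }
  obtain ⟨ns, hns1, hns⟩ : ∃ n : ℕ, m + 1 ≤ n ∧ xs + 1 / β ^ n ≤ t2 := by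
    have e1 := htend.eventually (gt_mem_nhds (sub_pos.2 hxt))
    obtain ⟨n, hn, hn'⟩ := (e1.and (eventually_ge_atTop (m + 1))).exists
    exact ⟨n, hn', by linarith⟩
  obtain ⟨lP, hlP⟩ : ∃ l, l = m * (wB m N).length + N * (m + 1) + (m + 1) := ⟨_, rfl⟩
  obtain ⟨lS, hlS⟩ : ∃ l, l = m * (wB m N).length + m := ⟨_, rfl⟩
  have hQ : ∀ a : List ℕ, ∃ P S : List ℕ, (∃ n, m + 1 ≤ n ∧ a ∈ Wd β ts n) →
      P.length = lP ∧ S.length = lS ∧ Good β t1 ε (P ++ a ++ S) := by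
    intro a
    by_cases ha : ∃ n, m + 1 ≤ n ∧ a ∈ Wd β ts n
    · obtain ⟨n, hn, x, hx, rfl⟩ := ha
      obtain ⟨P, S, hP⟩ := Qex hp (by linarith) hx hn
      exact ⟨P, S, fun _ => by rw [hlP, hlS]; exact hP⟩
    · exact ⟨[], [], fun h => absurd h ha⟩
  choose P S hPS using hQ
  obtain ⟨as, has⟩ : ∃ a, a = dg β ns xs := ⟨_, rfl⟩
  have hasP := hPS as ⟨ns, hns1, xs, hxs, has.symm⟩
  have hasl : as.length = ns := by rw [has, dg_length]
  obtain ⟨q, hq1, hq2⟩ : ∃ q, m + 1 ≤ q ∧ lP + lS + ns ≤ q := ⟨max (m + 1) (lP + lS + ns), le_max_left _ _, le_max_right _ _⟩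
  have hWl : ∀ {T : ℝ} {n : ℕ} {a}, a ∈ Wd β T n → a.length = n := by
    rintro T n a ⟨x, -, rfl⟩; exact dg_length _ _ _
  have hWP : ∀ {j : ℕ} {a}, a ∈ Wd β t2 (q * (j + 1)) →
      (P a).length = lP ∧ (S a).length = lS ∧ Good β t1 ε (P a ++ a ++ S a) := by
    rintro j a ⟨x, hx, rfl⟩
    exact hPS _ ⟨q * (j + 1), by nlinarith, x, Kset_anti h2 hx, rfl⟩
  obtain ⟨c0, hc0⟩ : ∃ c, c = ns + 3 * (lP + lS) + (wB m N).length := ⟨_, rfl⟩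
  set D := (dimH (Kset β t2)).toReal with hD
  have hlβ : 0 < Real.log β := Real.log_pos hβ
  obtain ⟨k, hk2, hk⟩ : ∃ k : ℕ, 2 ≤ k ∧ c0 * (D * Real.log β) < Real.log k := by
    have := (Real.tendsto_log_atTop.comp tendsto_natCast_atTop_atTop).eventually (eventually_gt_atTop (c0 * (D * Real.log β)))
    obtain ⟨k, hk, hk'⟩ := (this.and (eventually_ge_atTop 2)).exists
    exact ⟨k, hk', hk⟩
  have hfin : ∀ n, Finite (Wd β t2 n) := fun n => (Wd_finite hβ2 t2 n)
  let ι := Σ i : Fin k, (Wd β t2 (q * ((i : ℕ) + 1)) × Wd β t2 (q * ((k - 1 - i : ℕ) + 1)))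
  have hsum : ∀ i : Fin k, q * ((i : ℕ) + 1) + q * ((k - 1 - i : ℕ) + 1) = q * (k + 1) := by
    intro i
    rw [← mul_add]; congr 1; have := i.2; omega
  let X : ι → List ℕ := fun z => ((P z.2.1 ++ z.2.1 ++ S z.2.1) ++ (P as ++ as ++ S as) ++
    (P z.2.2 ++ z.2.2 ++ S z.2.2)) ++ wB m N
  have hX : ∀ z, (X z).length = q * (k + 1) + c0 := by
    rintro ⟨i, a, b⟩
    have e1 := hWP a.2
    have e2 := hWP b.2
    have e3 := hWl a.2
    have e4 := hWl b.2
    have e5 := hsum i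
    simp only [X, List.length_append, e1.1, e1.2.1, e2.1, e2.2.1, e3, e4, hasP.1, hasP.2.1, hasl]
    omega
  have hG : ∀ z, SGood β t1 ε (X z) := fun z =>
    SGood_append hp (Good_append (Good_append (hWP z.2.1.2).2.2 hasP.2.2) (hWP z.2.2.2).2.2)
  have hlt : ∀ z z' : ι, X z = X z' → ¬ z.1 < z'.1 := by
    rintro ⟨i, a, b⟩ ⟨i', a', b'⟩ he hlt
    replace hlt : (i : ℕ) + 1 ≤ i' := hlt
    have e1 := hWP a.2
    have e1' := hWP a'.2
    have e3 := hWl a.2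
    have e3' := hWl a'.2
    have s1 := slice' (Y := X ⟨i, a, b⟩) (A := P a ++ a ++ S a ++ P as) (B := as)
      (C := S as ++ (P b ++ b ++ S b) ++ wB m N) (o := lP + (q * (i + 1) + lS + lP)) (n := ns)
      (by simp [X]) (by simp [e1.1, e1.2.1, hasP.1, e3]; omega) hasl.symm
    have hle : q * ((i : ℕ) + 1) + q ≤ q * (i' + 1) := by nlinarith
    have s2 := slice (Y := X ⟨i', a', b'⟩) (A := P a') (B := a') 
      (C := S a' ++ (P as ++ as ++ S as) ++ (P b' ++ b' ++ S b') ++ wB m N)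
      (o := lP + (q * (i + 1) + lS + lP)) (n := ns) (u := q * (i + 1) + lS + lP)
      (by simp [X]) (by rw [e1'.1]) (by rw [e3']; omega)
    rw [← he, s1] at s2
    obtain ⟨x, hx, hxa⟩ := a'.2
    rw [dg_slice hxa (by omega)] at s2
    have hy := Kset_iter hx (q * (i + 1) + lS + lP)
    set y := (Tbeta β)^[q * (i + 1) + lS + lP] x
    have hc := dg_close hβ ns hy.1.1 hxs.1.1 (s2.symm.trans has)
    have hy2 := (Kset_iter hy ns).1.2
    have hx2 := (Kset_iter hxs ns).1.1
    have hy3 := hy.2 0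
    simp only [Function.iterate_zero, id] at hy3
    have : ((Tbeta β)^[ns] y - (Tbeta β)^[ns] xs) / β ^ ns < 1 / β ^ ns := by
      gcongr; linarith
    linarith
  have hinj : Function.Injective X := by
    intro z z' he
    have hi : z.1 = z'.1 := le_antisymm (not_lt.1 (hlt _ _ he.symm)) (not_lt.1 (hlt _ _ he))
    obtain ⟨i, a, b⟩ := z
    obtain ⟨i', a', b'⟩ := z'
    dsimp only at hi
    subst hi
    have e1 := hWP a.2
    have e1' := hWP a'.2
    have e2 := hWP b.2
    have e2' := hWP b'.2
    have e3 := hWl a.2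
    have e3' := hWl a'.2
    have e4 := hWl b.2
    have e4' := hWl b'.2
    have s1 : ∀ (a : Wd β t2 (q * ((i : ℕ) + 1))) (b : Wd β t2 (q * ((k - 1 - i : ℕ) + 1))),
        ((X ⟨i, a, b⟩).drop lP).take (q * (i + 1)) = a := fun a b =>
      slice' (A := P a) (B := a)
        (C := S a ++ (P as ++ as ++ S as) ++ (P b ++ b ++ S b) ++ wB m N)
        (by simp [X]) (hWP a.2).1.symm (hWl a.2).symm
    have s2 : ∀ (a : Wd β t2 (q * ((i : ℕ) + 1))) (b : Wd β t2 (q * ((k - 1 - i : ℕ) + 1))),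
        ((X ⟨i, a, b⟩).drop (lP + q * (i + 1) + lS + (lP + ns + lS) + lP)).take
          (q * ((k - 1 - i : ℕ) + 1)) = b := fun a b =>
      slice' (A := P a ++ a ++ S a ++ (P as ++ as ++ S as) ++ P b) (B := b)
        (C := S b ++ wB m N)
        (by simp [X]) (by
          simp only [List.length_append, (hWP a.2).1, (hWP a.2).2.1, (hWP b.2).1, hWl a.2, hasP.1,
            hasP.2.1, hasl]) (hWl b.2).symm
    have ha : a = a' := Subtype.ext (by rw [← s1 a b, ← s1 a' b', he])
    have hb : b = b' := Subtype.ext (by rw [← s2 a b, ← s2 a' b', he])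
    rw [ha, hb]
  have : Finite ι := inferInstance
  have hcard : Nat.card ι = ∑ i : Fin k, Nat.card (Wd β t2 (q * ((i : ℕ) + 1))) *
      Nat.card (Wd β t2 (q * ((k - 1 - i : ℕ) + 1))) := by
    rw [Nat.card_sigma]; simp [Nat.card_prod]
  have hWpos : ∀ n, 0 < Nat.card (Wd β t2 n) := by
    intro n
    obtain ⟨x, hx⟩ := hne
    have : Nonempty (Wd β t2 n) := ⟨⟨_, x, hx, rfl⟩⟩
    exact Nat.card_pos
  have hWexp : ∀ j, Real.exp ((q * (j + 1) : ℕ) * (D * Real.log β)) ≤ Nat.card (Wd β t2 (q * (j + 1))) := by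
    intro j
    rw [← Real.le_log_iff_exp_le (by exact_mod_cast hWpos _)]
    exact upper' hβ hβ2 hne (by nlinarith)
  have hcard2 : k * Real.exp ((q * (k + 1) : ℕ) * (D * Real.log β)) ≤ Nat.card ι := by
    rw [hcard]
    push_cast [-Nat.cast_mul]
    have : k * Real.exp ((q * (k + 1) : ℕ) * (D * Real.log β)) =
      ∑ i : Fin k, Real.exp ((q * (k + 1) : ℕ) * (D * Real.log β)) := by simp
    rw [this]
    apply Finset.sum_le_sum
    intro i _
    rw [← hsum i, Nat.cast_add, add_mul, Real.exp_add, Nat.cast_mul (Nat.card _)]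
    exact mul_le_mul (hWexp _) (hWexp _) (Real.exp_pos _).le (Nat.cast_nonneg _)
  have hD0 : 0 ≤ D := ENNReal.toReal_nonneg
  have hk0 : (0 : ℝ) < k := by positivity
  have hM : 1 < Nat.card ι := by
    have : (2 : ℝ) ≤ Nat.card ι := by
      refine le_trans ?_ hcard2
      have e1 : (2 : ℝ) ≤ k := by exact_mod_cast hk2
      have e2 : 1 ≤ Real.exp ((q * (k + 1) : ℕ) * (D * Real.log β)) := Real.one_le_exp (by positivity)
      nlinarith
    have : 2 ≤ Nat.card ι := by exact_mod_cast this
    omega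
  have hlow := lower hβ h0 hε (by have := hb.lt; linarith) hM (X := fun j => X ((Finite.equivFin ι).symm j))
    (hinj.comp (Equiv.injective _)) (L := q * (k + 1) + c0) (by nlinarith) (fun _ => hX _) (fun _ => hG _)
  refine lt_of_lt_of_le ?_ hlow
  rw [← ENNReal.ofReal_toReal (dimH_lt_top' (Kset β t2)), ← hD]
  have hL : (0 : ℝ) < (q * (k + 1) + c0 : ℕ) := by
    have : 0 < q * (k + 1) := Nat.mul_pos (by omega) (by omega)
    exact_mod_cast Nat.add_pos_left this _
  have hfinal : D < Real.log (Nat.card ι) / ((q * (k + 1) + c0 : ℕ) * Real.log β) := by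
    rw [lt_div_iff₀ (by positivity)]
    have e1 := Real.log_le_log (by positivity) hcard2
    rw [Real.log_mul hk0.ne' (Real.exp_pos _).ne', Real.log_exp] at e1
    rw [Nat.cast_add]
    nlinarith
  exact (ENNReal.ofReal_lt_ofReal_iff (lt_of_le_of_lt hD0 hfinal)).2 hfinal


theorem left_ev {β : ℝ} (s : List ℕ) : lyndonLeft β s = ev β s 0 := by
  induction s with
  | nil => simp [lyndonLeft, ev]
  | cons a s ih =>
    rw [ev, ← ih, lyndonLeft, lyndonLeft, List.length_cons, Finset.sum_range_succ', add_div,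
      Finset.sum_div, add_comm]
    simp only [List.getD_cons_succ, List.getD_cons_zero, zero_add, pow_one]
    congr 1
    apply Finset.sum_congr rfl
    intro i _
    rw [pow_succ β (i + 1), div_div]

theorem right_ev {β : ℝ} (hβ : 1 < β) {s : List ℕ} (hs : s ≠ []) :
    ev β s (lyndonRight β s) = lyndonRight β s := by
  have h := ev_sub hβ s (lyndonRight β s) 0
  rw [← left_ev] at h
  have hp : 1 < β ^ s.length := one_lt_pow₀ hβ (by simpa using hs)
  have h1 : β ^ s.length - 1 ≠ 0 := by linarith
  have h2 : β ^ s.length ≠ 0 := by positivity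
  have : ev β s (lyndonRight β s) = lyndonLeft β s + lyndonRight β s / β ^ s.length := by
    rw [sub_zero] at h; linarith
  rw [this, lyndonRight]
  field_simp
  ring

def qd (m : ℕ) : ℕ → ℕ := fun i => if i % (m + 1) = m then 0 else 1

theorem qd_rec {β : ℝ} {m : ℕ} (h : Bas β m) (n : ℕ) :
    β * Rr β (n % (m + 1)) = qd m n + Rr β ((n + 1) % (m + 1)) := by
  have h1 := h.h1
  by_cases hn : n % (m + 1) = m
  · have h2 : (n + 1) % (m + 1) = 0 := by
      rw [Nat.add_mod, hn]
      rcases h.hm.lt_or_eq with h3 | h3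
      · rw [Nat.mod_eq_of_lt (a := 1) (by omega), Nat.mod_self]
      · subst h3; rfl
    rw [h2, hn, h.Rm, qd, if_pos hn, Rr]
    field_simp; simp
  · have h2 : (n + 1) % (m + 1) = n % (m + 1) + 1 := by
      have h3 := Nat.mod_lt n (show 0 < m + 1 by omega)
      rw [Nat.add_mod, Nat.mod_eq_of_lt (a := 1) (by have := h.hm; omega), Nat.mod_eq_of_lt (by omega)]
    rw [h2, qd, if_neg hn, Rr]; simp

theorem qd_R {β : ℝ} {m : ℕ} (h : Bas β m) (n : ℕ) : 0 < Rr β (n % (m + 1)) := by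
  have h1 := h.h1
  have h2 := h.R_ge (k := n % (m + 1)) (by have := Nat.mod_lt n (show 0 < m + 1 by omega); omega)
  have : 0 < 1 / β := by positivity
  linarith

theorem qd_sum {β : ℝ} {m : ℕ} (h : Bas β m) (n : ℕ) :
    ∑ i ∈ Finset.range n, (qd m i : ℝ) / β ^ (i + 1) = 1 - Rr β (n % (m + 1)) / β ^ n := by
  have h1 := h.h1
  induction n with
  | zero => simp [Rr]
  | succ n ih =>
    rw [Finset.sum_range_succ, ih]
    have : Rr β (n % (m + 1)) / β ^ n = (β * Rr β (n % (m + 1))) / β ^ (n + 1) := by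
      rw [pow_succ]; field_simp
    rw [this, qd_rec h n]; ring

theorem qd_quasi {β : ℝ} {m : ℕ} (h : Bas β m) : IsQuasiGreedy β (qd m) := by
  have h1 := h.h1
  refine ⟨fun i => by unfold qd; split_ifs <;> omega, ?_, ?_, ?_⟩
  · rintro ⟨N, hN⟩
    have := hN ((m + 1) * N) (by nlinarith)
    rw [qd, if_neg] at this
    · omega
    · rw [Nat.mul_mod_right]; have := h.hm; omega
  · apply HasSum.tsum_eq
    rw [hasSum_iff_tendsto_nat_of_nonneg (fun i => by positivity)]
    simp only [qd_sum h]
    have ht : Tendsto (fun n : ℕ => 1 / β ^ n) atTop (nhds 0) := by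
      have := tendsto_pow_atTop_nhds_zero_of_lt_one (r := β⁻¹) (by positivity) (inv_lt_one_of_one_lt₀ h1)
      simpa [one_div, inv_pow] using this
    have : Tendsto (fun n : ℕ => Rr β (n % (m + 1)) / β ^ n) atTop (nhds 0) := by
      refine squeeze_zero (fun n => div_nonneg (qd_R h n).le (by positivity)) (fun n => ?_) ht
      gcongr
      exact Rr_le_one h1 h.h2 _
    simpa using this.const_sub 1
  · intro e he1 he2 he3
    by_cases hed : e = qd m
    · exact Or.inl hed
    right
    have hex : ∃ q, e q ≠ qd m q := by
      by_contra hcon; push Not at hcon; exact hed (funext hcon)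
    classical
    have g1 := Nat.find_spec hex
    have g2 : ∀ i < Nat.find hex, e i = qd m i := fun i hi => by
      have := Nat.find_min hex hi; simpa using this
    set n := Nat.find hex
    rcases lt_or_gt_of_ne g1 with g3 | g3
    · exact ⟨n, g2, g3⟩
    exfalso
    have hen : e n = 1 := by have := he1 n; omega
    have hnm : n % (m + 1) = m := by
      by_contra hcon
      rw [qd, if_neg hcon] at g3; omega
    have hsum : ∑ i ∈ Finset.range (n + 1), (e i : ℝ) / β ^ (i + 1) = 1 := by
      rw [Finset.sum_range_succ, hen, Finset.sum_congr rfl (g := fun i => (qd m i : ℝ) / β ^ (i + 1))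
        (fun i hi => by rw [g2 i (Finset.mem_range.1 hi)]), qd_sum h, hnm, h.Rm, pow_succ]
      field_simp; simp
    push Not at he2
    obtain ⟨M, hM, hM2⟩ := he2 (n + 1)
    have hS : Summable (fun i : ℕ => (e i : ℝ) / β ^ (i + 1)) := by
      by_contra hcon
      rw [tsum_eq_zero_of_not_summable hcon] at he3; norm_num at he3
    have h4 := hS.sum_le_tsum (insert M (Finset.range (n + 1))) (fun i _ => by positivity)
    rw [he3, Finset.sum_insert (by simp; omega), hsum] at h4
    have : 0 < (e M : ℝ) / β ^ (M + 1) := by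
      have : (0 : ℝ) < e M := by exact_mod_cast Nat.pos_of_ne_zero hM2
      positivity
    linarith

theorem per_rec {β : ℝ} (hβ : 1 < β) {s : List ℕ} (hs : s ≠ []) (n : ℕ) :
    β * ev β (s.drop (n % s.length)) (lyndonRight β s) =
      perSeq s n + ev β (s.drop ((n + 1) % s.length)) (lyndonRight β s) := by
  have hp : 0 < s.length := List.length_pos_iff.2 hs
  have hn := Nat.mod_lt n hp
  have h0 : β ≠ 0 := by positivity
  have hd : ev β (s.drop ((n + 1) % s.length)) (lyndonRight β s) =
      ev β (s.drop (n % s.length + 1)) (lyndonRight β s) := by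
    by_cases h : n % s.length + 1 = s.length
    · have : (n + 1) % s.length = 0 := by
        rw [← Nat.mod_add_mod, h, Nat.mod_self]
      rw [this, h, List.drop_zero, List.drop_length, right_ev hβ hs, ev]
    · rw [← Nat.mod_add_mod, Nat.mod_eq_of_lt (a := n % s.length + 1) (by omega)]
  rw [hd, List.drop_eq_getElem_cons hn, ev, perSeq, List.getD_eq_getElem _ _ hn]
  field_simp

theorem per_lt_one {β : ℝ} {m : ℕ} (h : Bas β m) {s : List ℕ} (hs : IsBetaLyndon β s) (i : ℕ) (hi : i < s.length) :
    ev β (s.drop i) (lyndonRight β s) < 1 := by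
  have hβ := h.h1
  have hp : 0 < s.length := List.length_pos_iff.2 hs.1
  let u : ℕ → ℝ := fun n => ev β (s.drop (n % s.length)) (lyndonRight β s)
  have hu : ∀ n, β * u n = perSeq s n + u (n + 1) := per_rec hβ hs.1
  have : Nonempty (Fin s.length) := ⟨⟨0, hp⟩⟩
  obtain ⟨j, hj⟩ := Finite.exists_max (fun j : Fin s.length => u j)
  have hmax : ∀ n, u n ≤ u j := by
    intro n
    have := hj ⟨n % s.length, Nat.mod_lt _ hp⟩
    simpa [u] using this
  obtain ⟨k, hk1, hk2⟩ := hs.2.2.2 _ (qd_quasi h) j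
  simp only [shiftN] at hk1 hk2
  have hiter : ∀ q ≤ k, 1 - u j = (Rr β (q % (m + 1)) - u (q + j)) / β ^ q := by
    intro q
    induction q with
    | zero => intro _; simp [Rr]
    | succ q ih =>
      intro hq
      have e1 := qd_rec h q
      have e2 := hu (q + j)
      rw [hk1 q (by omega)] at e2
      rw [ih (by omega), pow_succ, div_eq_div_iff (by positivity) (by positivity)]
      rw [show q + 1 + j = q + j + 1 by ring]
      linear_combination (β ^ q) * (e1 - e2)
  have e0 := hiter k le_rfl
  have e1 := qd_rec h k
  have e2 := hu (k + j)
  have e3 : (perSeq s (k + j) : ℝ) + 1 ≤ qd m k := by exact_mod_cast hk2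
  have e4 := qd_R h (k + 1)
  have e5 := hmax (k + j + 1)
  have hlt : u j < 1 := by
    by_contra hcon
    push Not at hcon
    rw [eq_div_iff (by positivity)] at e0
    have hb : 1 ≤ β ^ k := one_le_pow₀ hβ.le
    nlinarith [mul_nonneg (sub_nonneg.2 hcon) (sub_nonneg.2 hb)]
  have := hmax i
  simp only [u, Nat.mod_eq_of_lt hi] at this
  exact this.trans_lt hlt

theorem lex_le {β : ℝ} (hβ : 1 < β) {r v : ℝ} (hv : 0 ≤ v) : ∀ a b : List ℕ, a.length = b.length →
    seqLt (wordSeq a) (wordSeq b) → (∀ j, ev β (a.drop j) r ≤ 1) → ev β a r ≤ ev β b v := by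
  intro a
  induction a with
  | nil =>
    rintro b hl ⟨n, _, hn⟩
    have : b = [] := List.length_eq_zero_iff.1 hl.symm
    subst this
    exact absurd hn (lt_irrefl _)
  | cons x a ih =>
    rintro b hl ⟨n, hn1, hn2⟩ hj
    cases b with
    | nil => simp at hl
    | cons y b =>
      simp only [ev]
      gcongr ?_ / _
      cases n with
      | zero =>
        simp only [wordSeq, List.getD_cons_zero] at hn2
        have h1 : (x : ℝ) + 1 ≤ y := by exact_mod_cast hn2
        have h2 := hj 1
        simp only [List.drop_succ_cons, List.drop_zero] at h2
        have h3 := ev_nonneg hβ b hv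
        linarith
      | succ n =>
        have h0 := hn1 0 (by omega)
        simp only [wordSeq, List.getD_cons_zero] at h0
        subst h0
        have := ih b (by simpa using hl) ⟨n, fun i hi => by simpa [wordSeq] using hn1 (i + 1) (by omega),
          by simpa [wordSeq] using hn2⟩ (fun j => by simpa using hj (j + 1))
        linarith

theorem lyA {β : ℝ} {m : ℕ} (h : Bas β m) {s : List ℕ} (hs : IsBetaLyndon β s) {i : ℕ} (hi1 : 1 ≤ i)
    (hi : i < s.length) {v : ℝ} (hv : 0 ≤ v) : lyndonRight β s ≤ ev β (s.drop i) v := by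
  have hβ := h.h1
  have hp : 0 < s.length := List.length_pos_iff.2 hs.1
  have hR1 : lyndonRight β s < 1 := by
    have := per_lt_one h hs 0 hp
    rwa [List.drop_zero, right_ev hβ hs.1] at this
  have hall : ∀ j, ev β (s.drop j) (lyndonRight β s) ≤ 1 := by
    intro j
    rcases lt_or_ge j s.length with hj | hj
    · exact (per_lt_one h hs j hj).le
    · rw [List.drop_eq_nil_of_le hj, ev]; exact hR1.le
  have key := lex_le hβ hv (r := ev β (s.drop (s.length - i)) (lyndonRight β s)) (s.take (s.length - i)) (s.drop i) (by simp)
    (hs.2.2.1 i hi1 hi) (fun j => by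
      rw [← ev_append]
      rcases le_total j (s.length - i) with hj | hj
      · have : (s.take (s.length - i)).drop j ++ s.drop (s.length - i) = s.drop j := by
          conv_rhs => rw [← List.take_append_drop (s.length - i) s]
          rw [List.drop_append_of_le_length (by simp; omega)]
        rw [this]; exact hall j
      · rw [List.drop_eq_nil_of_le (by simp; omega), List.nil_append]; exact hall _)
  rwa [← ev_append, List.take_append_drop, right_ev hβ hs.1] at key

theorem Adm_iff {β t v : ℝ} (w : List ℕ) : Adm β t w v ↔
    ∀ i < w.length, t ≤ ev β (w.drop i) v ∧ ev β (w.drop i) v < 1 := by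
  induction w with
  | nil => simp [Adm]
  | cons d w ih =>
    rw [Adm, ih]
    constructor
    · rintro ⟨h1, h2⟩ i hi
      cases i with
      | zero => exact h1
      | succ i => exact h2 i (by simpa using hi)
    · intro h
      exact ⟨h 0 (by simp), fun i hi => h (i + 1) (by simpa using hi)⟩



theorem tend_aux {β : ℝ} (hβ : 1 < β) {ε : ℝ} (hε : 0 < ε) (m : ℕ) : ∃ N : ℕ, 1 / β ^ ((m + 1) * N) ≤ ε := by
  have htend : Tendsto (fun n : ℕ => 1 / β ^ n) atTop (nhds 0) := by
    have := tendsto_pow_atTop_nhds_zero_of_lt_one (r := β⁻¹) (by positivity) (inv_lt_one_of_one_lt₀ hβ)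
    simpa [one_div, inv_pow] using this
  obtain ⟨N, hN⟩ := ((htend.eventually (gt_mem_nhds hε))).exists
  refine ⟨N, le_trans ?_ hN.le⟩
  gcongr
  · exact hβ.le
  · nlinarith

theorem Kset_nonempty {β t : ℝ} {m : ℕ} (h : Bas β m) (ht : 0 < t) (ht2 : t < 1 - 1 / β) :
    (Kset β t).Nonempty := by
  obtain ⟨N, hN⟩ := tend_aux h.h1 (sub_pos.2 ht2) m
  have hp : Par β m t (1 - 1 / β - t) N :=
    { h with ht := ht, hε := sub_pos.2 ht2, ht2 := by linarith, hN := hN }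
  have hl := wB_length h.hm N
  have hm := h.hm
  have hL : 1 ≤ (wB m N).length := by nlinarith
  have hG : ∀ i : Unit, SGood β t (1 - 1 / β - t) ((fun _ => wB m N) i) := fun _ v hv => hp.B hv
  obtain ⟨g, hg⟩ := cantor h.h1 (sub_pos.2 ht2) hL (fun _ => rfl) hG
  exact ⟨_, cantor_mem h.h1 ht.le (by have := h.lt; linarith) hL (fun _ => rfl) hG hg (fun _ => ())⟩

theorem per_mem {β : ℝ} {m : ℕ} (h : Bas β m) {s : List ℕ} (hs : IsBetaLyndon β s)
    (h0 : 0 < lyndonRight β s) : lyndonRight β s ∈ Kset β (lyndonRight β s) := by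
  have hβ := h.h1
  have hp : 0 < s.length := List.length_pos_iff.2 hs.1
  have hR1 : lyndonRight β s < 1 := by
    have := per_lt_one h hs 0 hp
    rwa [List.drop_zero, right_ev hβ hs.1] at this
  have hA : Adm β (lyndonRight β s) s (lyndonRight β s) := by
    rw [Adm_iff]
    intro i hi
    refine ⟨?_, per_lt_one h hs i hi⟩
    rcases Nat.eq_zero_or_pos i with rfl | hi0
    · rw [List.drop_zero, right_ev hβ hs.1]
    · exact lyA h hs hi0 hi h0.le
  obtain ⟨h1, h2⟩ := Adm_iter hβ h0.le hA le_rfl hR1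
  rw [right_ev hβ hs.1] at h1 h2
  refine ⟨⟨h0.le, hR1⟩, fun n => ?_⟩
  have hper : Function.IsPeriodicPt (Tbeta β) s.length (lyndonRight β s) := h1
  rw [← hper.iterate_mod_apply]
  exact (h2 _ (Nat.mod_lt _ hp).le).1

theorem part_one {β : ℝ} {m : ℕ} (h : Bas β m) {s : List ℕ} (hs : IsBetaLyndon β s)
    (h0 : 0 < lyndonLeft β s) (hlt : lyndonLeft β s < lyndonRight β s) :
    Kset β (lyndonLeft β s) ⊆ Kset β (lyndonRight β s) := by
  have hβ := h.h1
  have hp : 0 < s.length := List.length_pos_iff.2 hs.1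
  have hR1 : lyndonRight β s < 1 := by
    have := per_lt_one h hs 0 hp
    rwa [List.drop_zero, right_ev hβ hs.1] at this
  have hbp : 1 < β ^ s.length := one_lt_pow₀ hβ (by omega)
  have step : ∀ x ∈ Kset β (lyndonLeft β s), x < lyndonRight β s →
      ∃ v ∈ Kset β (lyndonLeft β s), v < lyndonRight β s ∧
        lyndonRight β s - v = β ^ s.length * (lyndonRight β s - x) := by
    intro x hx hxR
    have hx0 : lyndonLeft β s ≤ x := hx.2 0
    obtain ⟨v, hv⟩ : ∃ v, v = β ^ s.length * (x - lyndonLeft β s) := ⟨_, rfl⟩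
    have hv0 : 0 ≤ v := by rw [hv]; exact mul_nonneg (by positivity) (by linarith)
    have hxe : ev β s v = x := by
      have := ev_sub hβ s v 0
      rw [← left_ev, sub_zero, hv, mul_div_cancel_left₀ _ (by positivity), ← hv] at this
      linarith
    have hsub := ev_sub hβ s (lyndonRight β s) v
    rw [hxe, right_ev hβ hs.1, eq_div_iff (by positivity)] at hsub
    have hvR : v < lyndonRight β s := by
      have : 0 < (lyndonRight β s - x) * β ^ s.length := mul_pos (by linarith) (by positivity)
      linarith
    have hA : Adm β 0 s v := by
      rw [Adm_iff]
      intro i hi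
      exact ⟨ev_nonneg hβ _ hv0, (ev_lt hβ _ hvR).trans (per_lt_one h hs i hi)⟩
    have h1 := (Adm_iter hβ le_rfl hA hv0 (hvR.trans hR1)).1
    rw [hxe] at h1
    refine ⟨v, h1 ▸ Kset_iter hx _, hvR, by linarith⟩
  have hge : ∀ x ∈ Kset β (lyndonLeft β s), lyndonRight β s ≤ x := by
    intro x hx
    by_contra hcon
    push Not at hcon
    have hit : ∀ k : ℕ, ∃ v ∈ Kset β (lyndonLeft β s), v < lyndonRight β s ∧
        lyndonRight β s - v = (β ^ s.length) ^ k * (lyndonRight β s - x) := by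
      intro k
      induction k with
      | zero => exact ⟨x, hx, hcon, by simp⟩
      | succ k ih =>
        obtain ⟨v, hv, hvR, he⟩ := ih
        obtain ⟨w, hw, hwR, he'⟩ := step v hv hvR
        exact ⟨w, hw, hwR, by rw [he', he, pow_succ]; ring⟩
    have ht := (tendsto_pow_atTop_atTop_of_one_lt hbp).eventually
      (eventually_gt_atTop (1 / (lyndonRight β s - x)))
    obtain ⟨k, hk⟩ := ht.exists
    obtain ⟨v, hv, _, he⟩ := hit k
    rw [div_lt_iff₀ (by linarith), ← he] at hk
    have := hv.1.1
    linarith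
  exact fun x hx => ⟨hx.1, fun n => hge _ (Kset_iter hx n)⟩

theorem R_orbit {β : ℝ} {m : ℕ} (h : Bas β m) : ∀ i ≤ m, (Tbeta β)^[i + 1] (1 - 1 / β) = Rr β (i + 1) := by
  have hβ := h.h1
  have hβ2 := h.h2
  have hR1 : Rr β 1 = β - 1 := by simp [Rr]
  intro i
  induction i with
  | zero =>
    intro _
    have : β * (1 - 1 / β) = β - 1 := by field_simp
    rw [zero_add, Function.iterate_one, Tbeta, this, hR1]
    exact Int.fract_eq_self.2 ⟨by linarith, by linarith⟩
  | succ i ih =>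
    intro hi
    rw [Function.iterate_succ_apply', ih (by omega), Tbeta]
    have e : β * Rr β (i + 1) = Rr β (i + 1 + 1) + 1 := by
      change _ = β * Rr β (i + 1) - 1 + 1; ring
    rw [e, Int.fract_add_one]
    have a1 := Rr_anti hβ hβ2 (show 1 ≤ i + 1 + 1 by omega)
    have a2 := Rr_anti hβ hβ2 (show i + 1 + 1 ≤ m + 1 by omega)
    rw [h.hR] at a2
    exact Int.fract_eq_self.2 ⟨a2, by linarith⟩

theorem right_lt {β : ℝ} {m : ℕ} (h : Bas β m) {s : List ℕ} (hs : IsBetaLyndon β s)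
    (h0 : 0 < lyndonLeft β s) (hlt : lyndonLeft β s < lyndonRight β s)
    (hsub : Ico (lyndonLeft β s) (lyndonRight β s) ⊆ Ico 0 (1 - 1 / β)) :
    lyndonRight β s < 1 - 1 / β := by
  have hle : lyndonRight β s ≤ 1 - 1 / β := by
    by_contra hcon
    push Not at hcon
    have := (hsub ⟨le_max_left (lyndonLeft β s) (1 - 1 / β), max_lt hlt hcon⟩).2
    exact absurd (le_max_right (lyndonLeft β s) (1 - 1 / β)) (not_le.2 this)
  refine lt_of_le_of_ne hle (fun he => ?_)
  have := (per_mem h hs (h0.trans hlt)).2 (m + 1)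
  have h2 := R_orbit h m le_rfl
  rw [← he, h.hR] at h2
  rw [h2] at this
  linarith

theorem left_pt {β : ℝ} {m : ℕ} (h : Bas β m) {s : List ℕ} (hs : IsBetaLyndon β s)
    (h0 : 0 < lyndonLeft β s) (hlt : lyndonLeft β s < lyndonRight β s)
    (hR : lyndonRight β s < 1 - 1 / β) {ts : ℝ} (hts0 : 0 < ts) (hts : ts < lyndonLeft β s) :
    ∃ x ∈ Kset β ts, x < lyndonLeft β s := by
  have hβ := h.h1
  have hβ2 := h.h2
  obtain ⟨s', c, hsc⟩ : ∃ s' c, s = s' ++ [c] := by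
    rcases List.eq_nil_or_concat s with h1 | ⟨s', c, h1⟩
    · exact absurd h1 hs.1
    · exact ⟨s', c, by simpa using h1⟩
  have hc : c = 1 := by
    have h1 : c ≤ 1 := hs.2.1 c (by rw [hsc]; simp)
    by_contra hcon
    have hc0 : c = 0 := by omega
    subst hc0
    rcases Nat.eq_zero_or_pos s'.length with hl | hl
    · rw [left_ev, hsc, List.length_eq_zero_iff.1 hl] at h0
      simp [ev] at h0
    · have := lyA h hs hl (by rw [hsc]; simp) le_rfl
      rw [hsc, List.drop_left, ← hsc] at this
      simp [ev] at this
      linarith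
  subst hc
  have hLall : ∀ i < s.length, lyndonLeft β s ≤ ev β (s.drop i) 0 := by
    intro i hi
    rcases Nat.eq_zero_or_pos i with rfl | hi0
    · rw [List.drop_zero, left_ev]
    · exact hlt.le.trans (lyA h hs hi0 hi le_rfl)
  obtain ⟨N, hN⟩ := tend_aux hβ (sub_pos.2 hts) m
  have hRb : lyndonRight β s < 1 / β := hR.trans h.lt
  have htR : ts ≤ lyndonRight β s := by linarith
  obtain ⟨a1, a2, a3, a4⟩ := AN_adm h htR hRb N
  obtain ⟨b1, b2, b3⟩ := ones_adm hβ hβ2 0 m (htR.trans a2) (by rw [zero_add, h.Rm]; exact a3)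
  have b4 := ones_ev hβ 0 m (ev β (powW (wA m) N) (lyndonRight β s) - 1 / β)
  rw [zero_add, h.Rm, add_sub_cancel, Rr] at b4
  rw [Rr] at b3
  set a := ev β (powW (wA m) N) (lyndonRight β s) with ha
  set z := ev β (List.replicate m 1) a with hz
  have hz1 : 1 - z ≤ lyndonLeft β s - ts := by
    have e1 : 1 - z = (1 / β - a) / β ^ m := by rw [b4]; ring
    have e2 : (1 / β - a) / β ^ m ≤ 1 / β - a := div_le_self (by linarith) (one_le_pow₀ hβ.le)
    have e3 : (1 / β - lyndonRight β s) / β ^ ((m + 1) * N) ≤ 1 / β ^ ((m + 1) * N) := by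
      gcongr
      have := h.lt1
      linarith
    linarith
  have hev : ∀ i < s.length, ev β ((s' ++ [0]).drop i) z = ev β (s.drop i) (z - 1) := by
    intro i hi
    have hi' : i ≤ s'.length := by rw [hsc] at hi; simp at hi; omega
    rw [hsc, List.drop_append_of_le_length hi', List.drop_append_of_le_length hi', ev_append, ev_append]
    simp [ev]
  have hlen : (s' ++ [0]).length = s.length := by rw [hsc]; simp
  have hA : Adm β ts (s' ++ [0]) z := by
    rw [Adm_iff]
    intro i hi
    rw [hlen] at hi
    rw [hev i hi]
    constructor
    · have e1 := ev_sub hβ (s.drop i) 0 (z - 1)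
      have e2 : (0 - (z - 1)) / β ^ (s.drop i).length ≤ 0 - (z - 1) :=
        div_le_self (by linarith) (one_le_pow₀ hβ.le)
      have e3 := hLall i hi
      linarith
    · exact (ev_lt hβ _ (by linarith)).trans (per_lt_one h hs i hi)
  have hmem := Kset_anti htR (per_mem h hs (h0.trans hlt))
  have hmem2 := Kset_ev hβ hts0.le hA (Kset_ev hβ hts0.le b1 (Kset_ev hβ hts0.le a1 hmem))
  refine ⟨_, hmem2, ?_⟩
  have e := hev 0 (List.length_pos_iff.2 hs.1)
  rw [List.drop_zero, List.drop_zero] at e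
  change ev β (s' ++ [0]) z < _
  rw [e, left_ev]
  exact ev_lt hβ _ (by linarith)

theorem main_aux {β : ℝ} {m : ℕ} (h : Bas β m) {s : List ℕ} (hs : IsBetaLyndon β s)
    (hne : lyndonLeft β s < lyndonRight β s)
    (hsub : Ico (lyndonLeft β s) (lyndonRight β s) ⊆ Ico 0 (1 - 1 / β)) :
    (∀ t ∈ Icc (lyndonLeft β s) (lyndonRight β s), Kset β t = Kset β (lyndonLeft β s)) ∧
    (∀ t, t < lyndonLeft β s → dimH (Kset β (lyndonLeft β s)) < dimH (Kset β t)) ∧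
    (∀ t, lyndonRight β s < t → dimH (Kset β t) < dimH (Kset β (lyndonLeft β s))) := by
  have hβ := h.h1
  have h0 : 0 < lyndonLeft β s := by
    refine lt_of_le_of_ne (by rw [left_ev]; exact ev_nonneg hβ _ le_rfl) (fun he => ?_)
    rw [lyndonRight, ← he] at hne
    simp at hne
  have hR := right_lt h hs h0 hne hsub
  have hmem := per_mem h hs (h0.trans hne)
  refine ⟨fun t ht => ?_, fun t ht => ?_, fun t ht => ?_⟩
  · exact (Kset_anti ht.1).antisymm ((part_one h hs h0 hne).trans (Kset_anti ht.2))
  · obtain ⟨t1, ht1⟩ : ∃ t1, t1 = max t (lyndonLeft β s / 2) := ⟨_, rfl⟩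
    have c1 : t1 < lyndonLeft β s := by rw [ht1]; exact max_lt ht (by linarith)
    have c2 : 0 < t1 := by rw [ht1]; exact lt_max_of_lt_right (by linarith)
    obtain ⟨ts, d1, d2⟩ := exists_between c1
    obtain ⟨x, hx, hxL⟩ := left_pt h hs h0 hne hR (c2.trans d1) d2
    have := thmG h c2 d1 d2.le (by linarith) ⟨_, Kset_anti hne.le hmem⟩ hx hxL
    exact this.trans_le (dimH_mono (Kset_anti (by rw [ht1]; exact le_max_left _ _)))
  · obtain ⟨t2, d1, d2⟩ := exists_between (lt_min ht hR)
    rw [lt_min_iff] at d2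
    have := thmG h h0 hne d1.le (by linarith) (Kset_nonempty h ((h0.trans hne).trans d1) d2.2) hmem d1
    exact (dimH_mono (Kset_anti d2.1.le)).trans_lt this

theorem fin17 (β : ℝ) (hβ : β ∈ Set.Ioo (1 : ℝ) 2) (hmulti : IsMultinacci β) (s : List ℕ)
    (hs : IsBetaLyndon β s) (hne : lyndonLeft β s < lyndonRight β s)
    (hsub : Set.Ico (lyndonLeft β s) (lyndonRight β s) ⊆ Set.Ico 0 (1 - 1 / β)) :
    (∀ t ∈ Set.Icc (lyndonLeft β s) (lyndonRight β s),
      dimH (Kset β t) = dimH (Kset β (lyndonLeft β s))) ∧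
    ∀ I : Set ℝ, I.OrdConnected → Set.Icc (lyndonLeft β s) (lyndonRight β s) ⊆ I →
      I ≠ Set.Icc (lyndonLeft β s) (lyndonRight β s) →
      ∃ x ∈ I, ∃ y ∈ I, dimH (Kset β x) ≠ dimH (Kset β y) := by
  obtain ⟨m, hm, hmb⟩ := hmulti
  have hb : Bas β m := ⟨hβ.1, hβ.2, hm, by rw [Rr_closed, hmb, sub_self]⟩
  obtain ⟨h1, h2, h3⟩ := main_aux hb hs hne hsub
  refine ⟨fun t ht => by rw [h1 t ht], fun I _ hI hIne => ?_⟩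
  have hL : lyndonLeft β s ∈ I := hI ⟨le_rfl, hne.le⟩
  obtain ⟨t, htI, ht⟩ : ∃ t ∈ I, t ∉ Icc (lyndonLeft β s) (lyndonRight β s) := by
    by_contra hcon
    push Not at hcon
    exact hIne (Subset.antisymm hcon hI)
  refine ⟨t, htI, _, hL, ?_⟩
  rw [mem_Icc, not_and_or, not_le, not_le] at ht
  rcases ht with ht | ht
  · exact (h2 t ht).ne'
  · exact (h3 t ht).ne

/-- For a multinacci `β ∈ (1,2)` and a nonempty β-Lyndon interval
`[t_L, t_R) ⊆ [0, 1 - 1/β)`, the closed interval `[t_L, t_R]` is a maximal interval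
on which `η_β(t) = dim_H K_β(t)` is constant. -/
theorem stmt_17 (β : ℝ) (hβ : β ∈ Set.Ioo (1 : ℝ) 2) (hmulti : IsMultinacci β)
    (s : List ℕ) (hs : IsBetaLyndon β s)
    (hne : lyndonLeft β s < lyndonRight β s)
    (hsub : Set.Ico (lyndonLeft β s) (lyndonRight β s) ⊆ Set.Ico (0 : ℝ) (1 - 1 / β)) :
    (∀ t ∈ Set.Icc (lyndonLeft β s) (lyndonRight β s),
      dimH (Kset β t) = dimH (Kset β (lyndonLeft β s))) ∧
    ∀ I : Set ℝ, I.OrdConnected →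
      Set.Icc (lyndonLeft β s) (lyndonRight β s) ⊆ I →
      I ≠ Set.Icc (lyndonLeft β s) (lyndonRight β s) →
      ∃ x ∈ I, ∃ y ∈ I, dimH (Kset β x) ≠ dimH (Kset β y) :=
  fin17 β hβ hmulti s hs hne hsub
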